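/- Let m ∈ {0,1} and p ∈ [1,∞], or m ≥ 2 an integer and p ∈ (1,∞], and set γ = max(0, m − 1/p). There is a constant C > 0, depending only on f, D, m and p, such that for every ν ∈ (0,1] and every t > 0, the solution satisfies |u(t)|_{m,p} ≤ C max(ν^{−γ}, t^{−γ}). -/

import Mathlib

open MeasureTheory Set
open scoped ENNReal

/-- The `L^p` norm (on the circle, i.e. over one period `(0,1]`) of the `m`-th
derivative of a function `v : ℝ → ℝ` (identified with a function on `S¹ = ℝ/ℤ`). -/
noncomputable def sobLp (m : ℕ) (p : ℝ≥0∞) (v : ℝ → ℝ) : ℝ :=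
  (eLpNorm (iteratedDeriv m v) p (volume.restrict (Ioc (0:ℝ) 1))).toReal

/-- `u` is a smooth, space-periodic, zero-mean-value solution of the generalised
Burgers equation `u_t + f'(u) u_x - ν u_xx = 0` with strongly convex `f` and
nonzero initial condition. -/
structure IsBurgersSolution (f : ℝ → ℝ) (σ ν : ℝ) (u : ℝ → ℝ → ℝ) : Prop where
  hf : ContDiff ℝ (⊤ : ℕ∞) f
  hσ : 0 < σ
  hconv : ∀ y, σ ≤ iteratedDeriv 2 f y
  hν : 0 < ν
  hu : ContDiffOn ℝ (⊤ : ℕ∞) (Function.uncurry u) (Ici (0:ℝ) ×ˢ univ)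
  hper : ∀ t x, u t (x + 1) = u t x
  hpde : ∀ t, 0 < t → ∀ x,
    deriv (fun s => u s x) t + deriv f (u t x) * deriv (u t) x
      - ν * deriv (deriv (u t)) x = 0
  hmean : ∀ t, 0 ≤ t → ∫ x in Ioc (0:ℝ) 1, u t x = 0
  hinit : ∃ x, u 0 x ≠ 0

/-- The quantity `D = max(|u₀|₁⁻¹, |u₀|_{1,∞})`. -/
noncomputable def burgersD (u : ℝ → ℝ → ℝ) : ℝ :=
  max (sobLp 0 1 (u 0))⁻¹ (sobLp 1 ⊤ (u 0))

/-- `T₁ = D⁻² C̃⁻¹ / 4`. -/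
noncomputable def burgersT₁ (D Ct : ℝ) : ℝ := (D ^ 2)⁻¹ * Ct⁻¹ / 4

/-- `T₂ = max(3T₁/2, 2Dσ⁻¹)`. -/
noncomputable def burgersT₂ (σ D Ct : ℝ) : ℝ :=
  max (3 / 2 * burgersT₁ D Ct) (2 * D * σ⁻¹)

/-- Time average over `[T₁, T₂]`. -/
noncomputable def timeAvg (T₁ T₂ : ℝ) (A : ℝ → ℝ) : ℝ :=
  (T₂ - T₁)⁻¹ * ∫ t in T₁..T₂, A t

/-- The structure function `S_p(ℓ)`. -/
noncomputable def structFun (T₁ T₂ : ℝ) (u : ℝ → ℝ → ℝ) (p ℓ : ℝ) : ℝ :=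
  timeAvg T₁ T₂ (fun t => ∫ x in Ioc (0:ℝ) 1, |u t (x + ℓ) - u t x| ^ p)

/-!
Convexity of `f` makes `u_x` grow no further than its initial maximum, so the gap
`g = D + 1 - u_x` is at least `1`. Since `ν u_x - f(u)` is transported and diffused without source,
`g` is also at most of order `M = max ν⁻¹ t⁻¹`, while its mean over a period is exactly `D + 1`.
These three facts already give the estimate for `m = 1` by interpolating between `L¹` and `L^∞`.

For `m ≥ 2` one shows `|∂ᵐu| ≤ C M ^ m (g / M) ^ β` pointwise, for each `β < 1` close to `1`, by
induction on `m`: a time-localised Bernstein functional of `∂ᵐu` and `∂ᵐ⁻¹u` is compared, via the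
maximum principle, with a multiple of `(g / M) ^ (2β)`. This weight is a supersolution with room to
spare: as `β < 1`, its own diffusion `ν β (1 - β) g ^ (β - 2) g_x ²` is a positive source, which
leaves part of the dissipation to absorb the commutator terms. With `β ≥ 1/p` the `L^p` norm of
`(g / M) ^ β` is of order `M ^ (-1/p)`, which is the gain `m - 1/p` over the exponent `m`. Such a
`β < 1` exists because `p > 1`.
-/

/-! ### The parabolic maximum principle -/

theorem exists_first_touching {X : Type*} [TopologicalSpace X] {Φ : ℝ → X → ℝ} {t₀ t₁ : ℝ}
    {K : Set X} (hK : IsCompact K) (hΦ : ContinuousOn (Function.uncurry Φ) (Icc t₀ t₁ ×ˢ K))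
    (hneg : ∀ x ∈ K, Φ t₀ x < 0) (hex : ∃ t ∈ Icc t₀ t₁, ∃ x ∈ K, 0 ≤ Φ t x) :
    ∃ τ ∈ Ioc t₀ t₁, (∃ ξ ∈ K, Φ τ ξ = 0) ∧ (∀ y ∈ K, Φ τ y ≤ 0) ∧
      ∀ s ∈ Ico t₀ τ, ∀ y ∈ K, Φ s y < 0 := by
  obtain ⟨t, ht, x, hx, htx⟩ := hex
  obtain ⟨Z, hZ, hZeq⟩ := continuousOn_iff_isClosed.1 hΦ (Ici 0) isClosed_Ici
  have hcompact : IsCompact (Function.uncurry Φ ⁻¹' Ici 0 ∩ Icc t₀ t₁ ×ˢ K) := by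
    rw [hZeq, inter_comm]
    exact (isCompact_Icc.prod hK).inter_right hZ
  obtain ⟨⟨τ, ξ⟩, ⟨hξ, hτI, hξK⟩, hfirst⟩ :=
    hcompact.exists_isMinOn ⟨(t, x), htx, ht, hx⟩ continuous_fst.continuousOn
  have hbefore : ∀ s ∈ Ico t₀ τ, ∀ y ∈ K, Φ s y < 0 := fun s hs y hy => by
    by_contra! hsy
    exact hs.2.not_ge (isMinOn_iff.1 hfirst (s, y) ⟨hsy, ⟨hs.1, hs.2.le.trans hτI.2⟩, hy⟩)
  have hle : ∀ y ∈ K, Φ τ y ≤ 0 := fun y hy => by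
    by_contra! hpos
    have hcont : ContinuousOn (fun s => Φ s y) (Icc t₀ τ) :=
      hΦ.comp (f := fun s => (s, y)) (by fun_prop)
        fun s hs => ⟨⟨hs.1, hs.2.trans hτI.2⟩, hy⟩
    obtain ⟨s, hs, hs0⟩ := intermediate_value_Ioo hτI.1 hcont ⟨hneg y hy, hpos⟩
    exact (hbefore s ⟨hs.1.le, hs.2⟩ y hy).ne hs0
  have hξ0 : Φ τ ξ = 0 := le_antisymm (hle ξ hξK) hξ
  have hτ : t₀ < τ := hτI.1.lt_of_ne fun h => (hneg ξ hξK).ne (h ▸ hξ0)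
  exact ⟨τ, ⟨hτ, hτI.2⟩, ⟨ξ, hξK, hξ0⟩, hle, hbefore⟩

theorem hasDerivAt_nonneg_of_forall_Icc_le {g : ℝ → ℝ} {g' a b : ℝ} (hab : a < b)
    (hg : HasDerivAt g g' b) (hmax : ∀ s ∈ Icc a b, g s ≤ g b) : 0 ≤ g' := by
  have hcone : a - b ∈ posTangentConeAt (Icc a b) b :=
    sub_mem_posTangentConeAt_of_segment_subset
      (segment_symm ℝ a b ▸ (segment_eq_Icc hab.le).subset)
  have hslope : (a - b) * g' ≤ 0 := by
    simpa using IsLocalMaxOn.hasFDerivWithinAt_nonpos (isMaxOn_iff.2 hmax).localize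
      hg.hasFDerivAt.hasFDerivWithinAt hcone
  exact nonneg_of_mul_nonpos_right hslope (sub_neg.2 hab)

theorem iteratedDeriv_two_nonpos_of_isLocalMax {φ : ℝ → ℝ} {x : ℝ} (hmax : IsLocalMax φ x)
    (hφ : ContinuousAt φ x) : iteratedDeriv 2 φ x ≤ 0 := by
  rw [iteratedDeriv_succ, iteratedDeriv_one]
  by_contra! hpos
  have hmin : IsLocalMin φ x := isLocalMin_of_deriv_deriv_pos hpos hmax.deriv_eq_zero hφ
  have hconst : φ =ᶠ[nhds x] fun _ => φ x :=
    hmin.mp (hmax.mono fun _ hle hge => le_antisymm hle hge)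
  simp [hconst.deriv.deriv_eq] at hpos

/-- The function `w` of time and space satisfies `w_t + a w_x - ν w_xx = r` at the point `(t, x)`.
Only the values of the velocity `a` and the source `r` at that point enter, so that both may depend
on `w` itself. -/
structure TransportDiffusionAt (ν a : ℝ) (w : ℝ → ℝ → ℝ) (r t x : ℝ) : Prop where
  contDiffAt : ContDiffAt ℝ 2 (w t) x
  hasDerivAt :
    HasDerivAt (fun s => w s x) (ν * iteratedDeriv 2 (w t) x - a * deriv (w t) x + r) t

namespace TransportDiffusionAt

variable {ν a r r₁ r₂ t x : ℝ} {w w₁ w₂ : ℝ → ℝ → ℝ}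

theorem add (h₁ : TransportDiffusionAt ν a w₁ r₁ t x) (h₂ : TransportDiffusionAt ν a w₂ r₂ t x) :
    TransportDiffusionAt ν a (fun s y => w₁ s y + w₂ s y) (r₁ + r₂) t x where
  contDiffAt := h₁.contDiffAt.add h₂.contDiffAt
  hasDerivAt := by
    refine (h₁.hasDerivAt.fun_add h₂.hasDerivAt).congr_deriv ?_
    rw [iteratedDeriv_fun_add h₁.contDiffAt h₂.contDiffAt,
      deriv_fun_add (h₁.contDiffAt.differentiableAt two_ne_zero)
        (h₂.contDiffAt.differentiableAt two_ne_zero)]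
    ring

theorem time_mul {c : ℝ → ℝ} {c' : ℝ} (hc : HasDerivAt c c' t)
    (h : TransportDiffusionAt ν a w r t x) :
    TransportDiffusionAt ν a (fun s y => c s * w s y) (c t * r + c' * w t x) t x where
  contDiffAt := contDiffAt_const.mul h.contDiffAt
  hasDerivAt := by
    refine (hc.fun_mul h.hasDerivAt).congr_deriv ?_
    rw [iteratedDeriv_const_mul_field, deriv_const_mul_field]
    ring

theorem const_mul (c : ℝ) (h : TransportDiffusionAt ν a w r t x) :
    TransportDiffusionAt ν a (fun s y => c * w s y) (c * r) t x := by
  simpa using h.time_mul (hasDerivAt_const t c)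

theorem sub (h₁ : TransportDiffusionAt ν a w₁ r₁ t x) (h₂ : TransportDiffusionAt ν a w₂ r₂ t x) :
    TransportDiffusionAt ν a (fun s y => w₁ s y - w₂ s y) (r₁ - r₂) t x := by
  simpa [sub_eq_add_neg] using h₁.add (h₂.const_mul (-1))

theorem of_time {c : ℝ → ℝ} {c' : ℝ} (hc : HasDerivAt c c' t) :
    TransportDiffusionAt ν a (fun s _ => c s) c' t x where
  contDiffAt := contDiffAt_const
  hasDerivAt := by simpa [iteratedDeriv_const] using hc

theorem comp {φ : ℝ → ℝ} (hφ : ContDiffAt ℝ 2 φ (w t x)) (h : TransportDiffusionAt ν a w r t x) :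
    TransportDiffusionAt ν a (fun s y => φ (w s y))
      (deriv φ (w t x) * r - ν * iteratedDeriv 2 φ (w t x) * deriv (w t) x ^ 2) t x where
  contDiffAt := hφ.comp x h.contDiffAt
  hasDerivAt := by
    have hφ' := hφ.differentiableAt two_ne_zero
    refine (HasDerivAt.comp t hφ'.hasDerivAt h.hasDerivAt).congr_deriv ?_
    rw [show (fun y => φ (w t y)) = φ ∘ w t from rfl, iteratedDeriv_comp_two hφ h.contDiffAt,
      deriv_comp x hφ' (h.contDiffAt.differentiableAt two_ne_zero)]
    ring

theorem sq (h : TransportDiffusionAt ν a w r t x) :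
    TransportDiffusionAt ν a (fun s y => w s y ^ 2)
      (2 * w t x * r - 2 * ν * deriv (w t) x ^ 2) t x := by
  convert h.comp (φ := fun z => z ^ 2) (by fun_prop) using 1
  have h2 : iteratedDeriv 2 (fun z : ℝ => z ^ 2) (w t x) = 2 := by
    simp
  simp only [h2, deriv_pow_field]
  ring

end TransportDiffusionAt

/-- At a first zero `Φ t` would have a spatial maximum, so that `0 ≤ Φ_t = ν Φ_xx + r ≤ r`. -/
theorem neg_of_transportDiffusionAt_touching {ν t₀ t₁ : ℝ} (hν : 0 ≤ ν) {Φ : ℝ → ℝ → ℝ}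
    (hΦ : ContinuousOn (Function.uncurry Φ) (Icc t₀ t₁ ×ˢ univ))
    (hper : ∀ t, Function.Periodic (Φ t) 1) (hneg : ∀ x, Φ t₀ x < 0)
    (htouch : ∀ t ∈ Ioc t₀ t₁, ∀ x, Φ t x = 0 → deriv (Φ t) x = 0 →
      ∃ a, ∃ r < 0, TransportDiffusionAt ν a Φ r t x) :
    ∀ t ∈ Icc t₀ t₁, ∀ x, Φ t x < 0 := by
  have hfund : ∀ t x, ∃ y ∈ Icc (0 : ℝ) 1, Φ t x = Φ t y := fun t x =>
    ((hper t).exists_mem_Ico₀ one_pos x).imp fun _ hy => ⟨Ico_subset_Icc_self hy.1, hy.2⟩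
  by_contra! ⟨t, ht, x, htx⟩
  obtain ⟨y, hy, hxy⟩ := hfund t x
  obtain ⟨τ, hτ, ⟨ξ, hξ, hτξ⟩, hle, hbefore⟩ :=
    exists_first_touching isCompact_Icc (hΦ.mono (prod_mono_right (subset_univ _)))
      (fun x _ => hneg x) ⟨t, ht, y, hy, hxy ▸ htx⟩
  have hmax : IsLocalMax (Φ τ) ξ := .of_forall fun z => by
    obtain ⟨z', hz', hzz'⟩ := hfund τ z
    exact hzz' ▸ hτξ ▸ hle z' hz'
  obtain ⟨a, r, hr, hTD⟩ := htouch τ hτ ξ hτξ hmax.deriv_eq_zero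
  have hxx := iteratedDeriv_two_nonpos_of_isLocalMax hmax hTD.contDiffAt.continuousAt
  have htime := hasDerivAt_nonneg_of_forall_Icc_le hτ.1 hTD.hasDerivAt fun s hs => by
    rcases hs.2.eq_or_lt with rfl | hsτ
    · exact le_rfl
    · exact hτξ ▸ (hbefore s ⟨hs.1, hsτ⟩ ξ hξ).le
  rw [hmax.deriv_eq_zero] at htime
  nlinarith [mul_nonpos_of_nonneg_of_nonpos hν hxx]

theorem le_of_transportDiffusionAt_nonpos {ν B : ℝ} (hν : 0 ≤ ν) {Ψ : ℝ → ℝ → ℝ}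
    (hΨ : ContinuousOn (Function.uncurry Ψ) (Ici 0 ×ˢ univ))
    (hper : ∀ t, Function.Periodic (Ψ t) 1) (hinit : ∀ x, Ψ 0 x ≤ B)
    (hsource : ∀ t > 0, ∀ x, ∃ a, ∃ r ≤ 0, TransportDiffusionAt ν a Ψ r t x)
    {t : ℝ} (ht : 0 ≤ t) (x : ℝ) : Ψ t x ≤ B := by
  refine le_of_forall_pos_le_add fun ε hε => ?_
  have hε' : 0 < ε / (1 + t) := by positivity
  -- Subtracting a barrier that grows in time makes the source strictly negative.
  have hneg := neg_of_transportDiffusionAt_touching (t₀ := 0) (t₁ := t) hν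
    (Φ := fun s y => Ψ s y - (B + ε / (1 + t) * (1 + s)))
    ((hΨ.mono (prod_mono_left Icc_subset_Ici_self)).sub (by fun_prop))
    (fun s y => by simp only [hper s y]) (fun y => by linarith [hinit y]) fun s hs y _ _ => ?_
  · have := hneg t ⟨ht, le_rfl⟩ x
    rw [div_mul_cancel₀ _ (by positivity)] at this
    linarith
  · obtain ⟨a, r, hr, hTD⟩ := hsource s hs.1 y
    have hbarrier : HasDerivAt (fun s => B + ε / (1 + t) * (1 + s)) (ε / (1 + t)) s := by
      simpa using (((hasDerivAt_id s).const_add 1).const_mul (ε / (1 + t))).const_add B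
    exact ⟨a, _, by linarith, hTD.sub (.of_time hbarrier)⟩

theorem abs_le_of_transportDiffusionAt_zero {ν B : ℝ} (hν : 0 ≤ ν) {Ψ : ℝ → ℝ → ℝ}
    (hΨ : ContinuousOn (Function.uncurry Ψ) (Ici 0 ×ˢ univ))
    (hper : ∀ t, Function.Periodic (Ψ t) 1) (hinit : ∀ x, |Ψ 0 x| ≤ B)
    (hsource : ∀ t > 0, ∀ x, ∃ a, TransportDiffusionAt ν a Ψ 0 t x)
    {t : ℝ} (ht : 0 ≤ t) (x : ℝ) : |Ψ t x| ≤ B := by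
  rw [abs_le']
  constructor
  · exact le_of_transportDiffusionAt_nonpos hν hΨ hper (fun y => (abs_le'.1 (hinit y)).1)
      (fun s hs y => (hsource s hs y).imp fun a h => ⟨0, le_rfl, h⟩) ht x
  · refine le_of_transportDiffusionAt_nonpos hν (Ψ := fun s y => -Ψ s y) hΨ.neg
      (fun s y => congrArg Neg.neg (hper s y)) (fun y => (abs_le'.1 (hinit y)).2)
      (fun s hs y => ?_) ht x
    obtain ⟨a, h⟩ := hsource s hs y
    exact ⟨a, 0, le_rfl, by simpa using h.const_mul (-1)⟩

/-! ### Commutators of transport and differentiation -/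

/-- The commutator `∂ᵏ(g(v) v') - g(v) ∂ᵏ⁺¹v` of the transport by the velocity `g(v)` with the
`k`-th derivative, evaluated at `x`. -/
noncomputable def transportCommutator (g : ℝ → ℝ) (k : ℕ) (v : ℝ → ℝ) (x : ℝ) : ℝ :=
  iteratedDeriv k (fun y => g (v y) * deriv v y) x - g (v x) * iteratedDeriv (k + 1) v x

theorem transportCommutator_zero (g v : ℝ → ℝ) (x : ℝ) : transportCommutator g 0 v x = 0 := by
  simp [transportCommutator]

theorem transportCommutator_eq_sum {g v : ℝ → ℝ} {k : ℕ} {x : ℝ}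
    (hgv : ContDiffAt ℝ k (fun y => g (v y)) x) (hv : ContDiffAt ℝ k (deriv v) x) :
    transportCommutator g k v x = ∑ i ∈ Finset.range k, (k.choose (i + 1) : ℝ) *
      (iteratedDeriv (i + 1) (fun y => g (v y)) x * iteratedDeriv (k - i) v x) := by
  rw [transportCommutator, iteratedDeriv_fun_mul hgv hv, Finset.sum_range_succ']
  simp only [Nat.choose_zero_right, Nat.cast_one, one_mul, iteratedDeriv_zero, Nat.sub_zero,
    ← iteratedDeriv_succ', add_sub_cancel_right]
  refine Finset.sum_congr rfl fun i hi => ?_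
  rw [show k - (i + 1) + 1 = k - i by have := Finset.mem_range.1 hi; omega, mul_assoc]

theorem transportCommutator_one {g v : ℝ → ℝ} {x : ℝ} (hg : ContDiff ℝ 1 g)
    (hv : ContDiff ℝ 2 v) :
    transportCommutator g 1 v x = deriv g (v x) * deriv v x ^ 2 := by
  have hgv : ContDiff ℝ 1 fun y => g (v y) := hg.comp (hv.of_le one_le_two)
  rw [transportCommutator_eq_sum hgv.contDiffAt (hv.deriv' (n := 1)).contDiffAt]
  have hchain := deriv_comp x (hg.differentiable one_ne_zero (v x))
    (hv.differentiable two_ne_zero x)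
  simp only [Finset.sum_range_one, zero_add, Nat.choose_self, Nat.cast_one, one_mul, tsub_zero,
    iteratedDeriv_one]
  rw [show (fun y => g (v y)) = g ∘ v from rfl, hchain]
  ring

/-- The derivatives of `v` of orders `1, …, n` at `x` are bounded like those of a profile of
amplitude `Y` that varies on the length scale `M⁻¹`. -/
def DerivBoundAt (Y M : ℝ) (n : ℕ) (v : ℝ → ℝ) (x : ℝ) : Prop :=
  ∀ j, 1 ≤ j → j ≤ n → |iteratedDeriv j v x| ≤ Y * M ^ j

theorem DerivBoundAt.mono {Y Y' M x : ℝ} {n n' : ℕ} {v : ℝ → ℝ} (h : DerivBoundAt Y M n v x)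
    (hM : 0 ≤ M) (hY : Y ≤ Y') (hn : n' ≤ n) : DerivBoundAt Y' M n' v x := fun j hj hjn =>
  (h j hj (hjn.trans hn)).trans (by gcongr)

theorem exists_abs_iteratedDeriv_comp_le {h : ℝ → ℝ} {n : ℕ} (hh : ContDiff ℝ n h) (D : ℝ)
    {A : ℝ} (hA : 1 ≤ A) :
    ∃ C ≥ 0, ∀ v : ℝ → ℝ, ContDiff ℝ n v → ∀ x M, 0 ≤ M → |v x| ≤ D → DerivBoundAt A M n v x →
      |iteratedDeriv n (fun y => h (v y)) x| ≤ C * M ^ n := by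
  have hbdd : ∀ i : ℕ, ∃ B, i ≤ n → ∀ y ∈ Icc (-D) D, ‖iteratedDeriv i h y‖ ≤ B := fun i => by
    by_cases hi : i ≤ n
    · obtain ⟨B, hB⟩ := isCompact_Icc.exists_bound_of_continuousOn
        (hh.continuous_iteratedDeriv i (by exact_mod_cast hi)).continuousOn
      exact ⟨B, fun _ => hB⟩
    · exact ⟨0, fun h => absurd h hi⟩
  choose B hB using hbdd
  set S := ∑ i ∈ Finset.range (n + 1), |B i|
  refine ⟨n.factorial * S * A ^ n, by positivity, fun v hv x M hM hvD hbound => ?_⟩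
  rw [mul_assoc, ← mul_pow, ← Real.norm_eq_abs, ← norm_iteratedFDeriv_eq_norm_iteratedDeriv]
  refine norm_iteratedFDeriv_comp_le hh hv le_rfl x (fun i hi => ?_) fun i hi hin => ?_
  · rw [norm_iteratedFDeriv_eq_norm_iteratedDeriv]
    calc ‖iteratedDeriv i h (v x)‖ ≤ |B i| := (hB i hi _ (abs_le.1 hvD)).trans (le_abs_self _)
      _ ≤ S := Finset.single_le_sum (f := fun i => |B i|) (fun i _ => abs_nonneg _)
        (Finset.mem_range_succ_iff.2 hi)
  · rw [norm_iteratedFDeriv_eq_norm_iteratedDeriv, mul_pow]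
    calc ‖iteratedDeriv i v x‖ ≤ A * M ^ i := hbound i hi hin
      _ ≤ A ^ i * M ^ i := by gcongr; exact le_self_pow₀ hA (by omega)

theorem DerivBoundAt.pow_mul_abs_iteratedDeriv_sub_le {Y M x : ℝ} {i k n : ℕ} {v : ℝ → ℝ}
    (h : DerivBoundAt Y M n v x) (hY : 0 ≤ Y) (hM : 0 ≤ M) (hik : i < k) (hkn : k ≤ n + 1) :
    M ^ i * |iteratedDeriv (k - i) v x| ≤ |iteratedDeriv k v x| + M ^ k * Y := by
  rcases Nat.eq_zero_or_pos i with rfl | hi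
  · rw [pow_zero, one_mul, Nat.sub_zero]
    exact le_add_of_nonneg_right (by positivity)
  · calc M ^ i * |iteratedDeriv (k - i) v x| ≤ M ^ i * (Y * M ^ (k - i)) := by
          gcongr; exact h _ (by omega) (by omega)
      _ = M ^ k * Y := by rw [← pow_mul_pow_sub M hik.le]; ring
      _ ≤ _ := le_add_of_nonneg_left (abs_nonneg _)

theorem exists_abs_iteratedDeriv_succ_comp_le {g : ℝ → ℝ} {n : ℕ} (hg : ContDiff ℝ (n + 1) g)
    (D : ℝ) {A : ℝ} (hA : 1 ≤ A) :
    ∃ C ≥ 0, ∀ v : ℝ → ℝ, ContDiff ℝ (n + 1) v → ∀ x M, 0 ≤ M → |v x| ≤ D →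
      DerivBoundAt A M n v x →
      |iteratedDeriv (n + 1) (fun y => g (v y)) x| ≤
        C * (|iteratedDeriv (n + 1) v x| + M ^ (n + 1)) := by
  have hg' : ContDiff ℝ n (deriv g) := hg.deriv'
  choose! B hB0 hB using fun (i : ℕ) (hi : i ≤ n) =>
    exists_abs_iteratedDeriv_comp_le (hg'.of_le (mod_cast hi) : ContDiff ℝ i (deriv g)) D hA
  have hB0' : ∀ i ∈ Finset.range (n + 1), 0 ≤ B i := fun i hi =>
    hB0 i (Finset.mem_range_succ_iff.1 hi)
  refine ⟨∑ i ∈ Finset.range (n + 1), (n.choose i : ℝ) * (B i * A),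
    Finset.sum_nonneg fun i hi => by have := hB0' i hi; positivity, ?_⟩
  intro v hv x M hM hvD hbound
  have hv' : ContDiff ℝ n (deriv v) := hv.deriv'
  have hchain : deriv (fun y => g (v y)) = fun y => deriv g (v y) * deriv v y := funext fun y =>
    deriv_comp y (hg.differentiable (by simp) _) (hv.differentiable (by simp) _)
  rw [iteratedDeriv_succ', hchain, iteratedDeriv_fun_mul (f := fun y => deriv g (v y))
    (hg'.comp (hv.of_le (by simp))).contDiffAt hv'.contDiffAt, Finset.sum_mul]
  refine (Finset.abs_sum_le_sum_abs _ _).trans (Finset.sum_le_sum fun i hi => ?_)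
  have hin := Finset.mem_range_succ_iff.1 hi
  have hBi := hB0' i hi
  have hgv := hB i hin v (hv.of_le (by exact_mod_cast hin.trans n.le_succ)) x M hM hvD
    (hbound.mono hM le_rfl hin)
  have hweight := hbound.pow_mul_abs_iteratedDeriv_sub_le (by positivity) hM
    (Nat.lt_succ_iff.2 hin) le_rfl
  rw [← iteratedDeriv_succ', ← Nat.sub_add_comm hin, abs_mul, abs_mul, Nat.abs_cast, mul_assoc,
    mul_assoc]
  refine mul_le_mul_of_nonneg_left ?_ (Nat.cast_nonneg _)
  calc |iteratedDeriv i (fun y => deriv g (v y)) x| * |iteratedDeriv (n + 1 - i) v x|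
      ≤ B i * (M ^ i * |iteratedDeriv (n + 1 - i) v x|) := by rw [← mul_assoc]; gcongr
    _ ≤ B i * (A * |iteratedDeriv (n + 1) v x| + M ^ (n + 1) * A) := by
        gcongr
        exact hweight.trans (by gcongr; exact le_mul_of_one_le_left (abs_nonneg _) hA)
    _ = B i * A * (|iteratedDeriv (n + 1) v x| + M ^ (n + 1)) := by ring

theorem exists_abs_mul_iteratedDeriv_le {g : ℝ → ℝ} {i k n : ℕ} (hg : ContDiff ℝ k g) (D : ℝ)
    {A : ℝ} (hA : 1 ≤ A) (hik : i < k) (hkn : k ≤ n + 1) (hn : 1 ≤ n) :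
    ∃ C ≥ 0, ∀ v : ℝ → ℝ, ContDiff ℝ k v → ∀ x M Y, 0 ≤ M → 0 ≤ Y → Y ≤ A → |v x| ≤ D →
      DerivBoundAt Y M n v x →
      |iteratedDeriv (i + 1) (fun y => g (v y)) x * iteratedDeriv (k - i) v x| ≤
        C * (M * |iteratedDeriv k v x| + M ^ (k + 1) * Y) := by
  obtain rfl | hik' : i + 1 = k ∨ i + 1 < k := by omega
  · obtain ⟨C, hC, hbd⟩ := exists_abs_iteratedDeriv_succ_comp_le (n := i) (mod_cast hg) D hA
    refine ⟨C * A, by positivity, fun v hv x M Y hM hY hYA hvD hbound => ?_⟩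
    have hgv := hbd v (mod_cast hv) x M hM hvD (hbound.mono hM hYA (by omega))
    have hv1 : |iteratedDeriv 1 v x| ≤ Y * M := by simpa using hbound 1 le_rfl hn
    rw [abs_mul, Nat.add_sub_cancel_left]
    calc |iteratedDeriv (i + 1) (fun y => g (v y)) x| * |iteratedDeriv 1 v x|
        ≤ C * (|iteratedDeriv (i + 1) v x| + M ^ (i + 1)) * (Y * M) := by gcongr
      _ = C * (Y * (M * |iteratedDeriv (i + 1) v x|) + M ^ (i + 1 + 1) * Y) := by ring
      _ ≤ C * (A * (M * |iteratedDeriv (i + 1) v x|) + A * (M ^ (i + 1 + 1) * Y)) := by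
          refine mul_le_mul_of_nonneg_left (add_le_add (by gcongr) ?_) hC
          exact le_mul_of_one_le_left (by positivity) hA
      _ = _ := by ring
  · obtain ⟨C, hC, hbd⟩ := exists_abs_iteratedDeriv_comp_le (n := i + 1)
      (hg.of_le (by exact_mod_cast hik'.le)) D hA
    refine ⟨C, hC, fun v hv x M Y hM hY hYA hvD hbound => ?_⟩
    have hgv := hbd v (hv.of_le (by exact_mod_cast hik'.le)) x M hM hvD
      (hbound.mono hM hYA (by omega))
    rw [abs_mul]
    calc |iteratedDeriv (i + 1) (fun y => g (v y)) x| * |iteratedDeriv (k - i) v x|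
        ≤ C * M ^ (i + 1) * |iteratedDeriv (k - i) v x| := by gcongr
      _ = C * (M * (M ^ i * |iteratedDeriv (k - i) v x|)) := by ring
      _ ≤ C * (M * (|iteratedDeriv k v x| + M ^ k * Y)) := by
          gcongr
          exact hbound.pow_mul_abs_iteratedDeriv_sub_le hY hM hik hkn
      _ = _ := by ring

theorem exists_abs_transportCommutator_le {g : ℝ → ℝ} {k n : ℕ} (hg : ContDiff ℝ k g) (D : ℝ)
    {A : ℝ} (hA : 1 ≤ A) (hkn : k ≤ n + 1) (hn : 1 ≤ n) :
    ∃ C ≥ 0, ∀ v : ℝ → ℝ, ContDiff ℝ (k + 1) v → ∀ x M Y, 0 ≤ M → 0 ≤ Y → Y ≤ A → |v x| ≤ D →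
      DerivBoundAt Y M n v x →
      |transportCommutator g k v x| ≤ C * (M * |iteratedDeriv k v x| + M ^ (k + 1) * Y) := by
  choose! B hB0 hB using fun (i : ℕ) (hik : i < k) =>
    exists_abs_mul_iteratedDeriv_le hg D hA hik hkn hn
  have hB0' : ∀ i ∈ Finset.range k, 0 ≤ B i := fun i hi => hB0 i (Finset.mem_range.1 hi)
  refine ⟨∑ i ∈ Finset.range k, (k.choose (i + 1) : ℝ) * B i,
    Finset.sum_nonneg fun i hi => mul_nonneg (Nat.cast_nonneg _) (hB0' i hi), ?_⟩
  intro v hv x M Y hM hY hYA hvD hbound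
  have hvk : ContDiff ℝ k v := hv.of_le (by simp)
  have hgv : ContDiff ℝ k fun y => g (v y) := hg.comp hvk
  rw [transportCommutator_eq_sum hgv.contDiffAt hv.deriv'.contDiffAt, Finset.sum_mul]
  refine (Finset.abs_sum_le_sum_abs _ _).trans (Finset.sum_le_sum fun i hi => ?_)
  rw [abs_mul, Nat.abs_cast, mul_assoc]
  gcongr
  exact hB i (Finset.mem_range.1 hi) v hvk x M Y hM hY hYA hvD hbound

/-! ### Spatial derivatives of functions of time and space -/

section Slices

variable {E : Type*} [NormedAddCommGroup E] [NormedSpace ℝ E] {g : ℝ × ℝ → E} {L : ℝ × ℝ →L[ℝ] E}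
  {t x : ℝ}

theorem hasDerivAt_slice_fst (hg : HasFDerivAt g L (t, x)) :
    HasDerivAt (fun s => g (s, x)) (L (1, 0)) t :=
  hg.comp_hasDerivAt t ((hasDerivAt_id t).prodMk (hasDerivAt_const t x))

theorem hasDerivAt_slice_snd (hg : HasFDerivAt g L (t, x)) :
    HasDerivAt (fun y => g (t, y)) (L (0, 1)) x :=
  hg.comp_hasDerivAt x ((hasDerivAt_const x t).prodMk (hasDerivAt_id x))

end Slices

theorem contDiffOn_deriv_uncurry {I : Set ℝ} (hI : UniqueDiffOn ℝ I) {u : ℝ → ℝ → ℝ}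
    (hu : ContDiffOn ℝ (⊤ : ℕ∞) (Function.uncurry u) (I ×ˢ univ)) :
    ContDiffOn ℝ (⊤ : ℕ∞) (Function.uncurry fun t => deriv (u t)) (I ×ˢ univ) := by
  have hfderiv := hu.fderivWithin (m := (⊤ : ℕ∞)) (hI.prod uniqueDiffOn_univ) (by simp)
  refine (hfderiv.clm_apply (contDiffOn_const (c := ((0 : ℝ), (1 : ℝ))))).congr ?_
  rintro ⟨t, x⟩ ht
  have hline : HasDerivAt (fun y : ℝ => (t, y)) ((0 : ℝ), (1 : ℝ)) x :=
    (hasDerivAt_const x t).prodMk (hasDerivAt_id x)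
  have hcomp := (hu.differentiableOn (by simp) (t, x) ht).hasFDerivWithinAt.comp_hasDerivWithinAt
    (s := univ) x hline.hasDerivWithinAt fun y _ => ⟨ht.1, mem_univ y⟩
  exact (hasDerivWithinAt_univ.1 hcomp).deriv

theorem contDiffOn_iteratedDeriv_uncurry {I : Set ℝ} (hI : UniqueDiffOn ℝ I)
    {u : ℝ → ℝ → ℝ} (hu : ContDiffOn ℝ (⊤ : ℕ∞) (Function.uncurry u) (I ×ˢ univ)) (k : ℕ) :
    ContDiffOn ℝ (⊤ : ℕ∞) (Function.uncurry fun t => iteratedDeriv k (u t)) (I ×ˢ univ) := by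
  induction k with
  | zero => simpa using hu
  | succ k ih =>
    simpa only [iteratedDeriv_succ] using contDiffOn_deriv_uncurry hI ih

theorem hasDerivAt_deriv_of_contDiffAt_uncurry {u : ℝ → ℝ → ℝ} {t x : ℝ}
    (hu : ContDiffAt ℝ 2 (Function.uncurry u) (t, x)) :
    HasDerivAt (fun s => deriv (u s) x) (deriv (fun y => deriv (fun s => u s y) t) x) t := by
  have hF : HasFDerivAt (fderiv ℝ (Function.uncurry u))
      (fderiv ℝ (fderiv ℝ (Function.uncurry u)) (t, x)) (t, x) :=
    ((hu.fderiv_right (m := 1) le_rfl).differentiableAt one_ne_zero).hasFDerivAt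
  have hdiff : ∀ᶠ q in nhds (t, x), DifferentiableAt ℝ (Function.uncurry u) q :=
    (hu.eventually (by simp)).mono fun q hq => hq.differentiableAt two_ne_zero
  have hline_t : ContinuousAt (fun s : ℝ => (s, x)) t := by fun_prop
  have hline_x : ContinuousAt (fun y : ℝ => (t, y)) x := by fun_prop
  have hderiv_x : (fun s => deriv (u s) x) =ᶠ[nhds t]
      fun s => fderiv ℝ (Function.uncurry u) (s, x) (0, 1) :=
    (hline_t.eventually hdiff).mono fun s hs => (hasDerivAt_slice_snd hs.hasFDerivAt).deriv
  have hderiv_t : (fun y => deriv (fun s => u s y) t) =ᶠ[nhds x]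
      fun y => fderiv ℝ (Function.uncurry u) (t, y) (1, 0) :=
    (hline_x.eventually hdiff).mono fun y hy => (hasDerivAt_slice_fst hy.hasFDerivAt).deriv
  have hxt := (hasDerivAt_slice_fst hF).clm_apply (hasDerivAt_const t ((0 : ℝ), (1 : ℝ)))
  have htx := (hasDerivAt_slice_snd hF).clm_apply (hasDerivAt_const x ((1 : ℝ), (0 : ℝ)))
  rw [hderiv_t.deriv_eq, htx.deriv]
  refine (hxt.congr_of_eventuallyEq hderiv_x).congr_deriv ?_
  simpa using hu.isSymmSndFDerivAt (by simp) (1, 0) (0, 1)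

theorem hasDerivAt_iteratedDeriv_of_contDiffOn_uncurry {I : Set ℝ} (hI : IsOpen I)
    {u : ℝ → ℝ → ℝ} (hu : ContDiffOn ℝ (⊤ : ℕ∞) (Function.uncurry u) (I ×ˢ univ)) (k : ℕ) {t : ℝ}
    (ht : t ∈ I) (x : ℝ) :
    HasDerivAt (fun s => iteratedDeriv k (u s) x)
      (iteratedDeriv k (fun y => deriv (fun s => u s y) t) x) t := by
  have hat : ∀ y, ContDiffAt ℝ (⊤ : ℕ∞) (Function.uncurry u) (t, y) := fun y =>
    hu.contDiffAt ((hI.prod isOpen_univ).mem_nhds ⟨ht, mem_univ y⟩)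
  induction k generalizing u with
  | zero =>
    have hline : DifferentiableAt ℝ (fun s : ℝ => (s, x)) t := by fun_prop
    simp only [iteratedDeriv_zero]
    exact (((hat x).differentiableAt (by simp)).comp t hline).hasDerivAt
  | succ k ih =>
    have hmixed : (fun y => deriv (fun s => deriv (u s) y) t) =
        deriv fun y => deriv (fun s => u s y) t := funext fun y =>
      (hasDerivAt_deriv_of_contDiffAt_uncurry
        ((hat y).of_le (WithTop.coe_le_coe.2 le_top))).deriv
    have hu' := contDiffOn_deriv_uncurry hI.uniqueDiffOn hu
    simpa only [iteratedDeriv_succ', ← hmixed] using ih hu' fun y =>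
      hu'.contDiffAt ((hI.prod isOpen_univ).mem_nhds ⟨ht, mem_univ y⟩)

theorem periodic_iteratedDeriv {v : ℝ → ℝ} {c : ℝ} (hv : Function.Periodic v c) (k : ℕ) :
    Function.Periodic (iteratedDeriv k v) c := fun x => by
  simpa only [funext hv] using (congrFun (iteratedDeriv_comp_add_const k v c) x).symm

/-! ### A priori bounds for Burgers flows -/

theorem iteratedDeriv_two_nonneg_of_convexOn {f : ℝ → ℝ} (hf : ContDiff ℝ (⊤ : ℕ∞) f)
    (hconv : ConvexOn ℝ univ f) (y : ℝ) : 0 ≤ iteratedDeriv 2 f y := by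
  have hmono : Monotone (deriv f) := fun a b =>
    hconv.monotoneOn_deriv (fun z _ => hf.differentiable (by simp) z) (mem_univ a) (mem_univ b)
  simpa [iteratedDeriv_succ (n := 1)] using hmono.deriv_nonneg

/-- A smooth solution of `u_t + f'(u) u_x - ν u_xx = 0` on `t ≥ 0` of period one in space. -/
structure IsBurgersFlow (f : ℝ → ℝ) (ν : ℝ) (u : ℝ → ℝ → ℝ) : Prop where
  contDiffOn : ContDiffOn ℝ (⊤ : ℕ∞) (Function.uncurry u) (Ici 0 ×ˢ univ)
  periodic : ∀ t, Function.Periodic (u t) 1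
  pde : ∀ t, 0 < t → ∀ x,
    deriv (fun s => u s x) t + deriv f (u t x) * deriv (u t) x - ν * deriv (deriv (u t)) x = 0

namespace IsBurgersFlow

variable {f : ℝ → ℝ} {ν L t : ℝ} {u : ℝ → ℝ → ℝ}

theorem contDiff (h : IsBurgersFlow f ν u) (ht : 0 ≤ t) : ContDiff ℝ (⊤ : ℕ∞) (u t) :=
  h.contDiffOn.comp_contDiff (f := fun x => (t, x)) (by fun_prop) fun _ => ⟨ht, mem_univ _⟩

theorem continuousOn_iteratedDeriv (h : IsBurgersFlow f ν u) (k : ℕ) :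
    ContinuousOn (Function.uncurry fun t => iteratedDeriv k (u t)) (Ici 0 ×ˢ univ) :=
  (contDiffOn_iteratedDeriv_uncurry (uniqueDiffOn_Ici 0) h.contDiffOn k).continuousOn

theorem transportDiffusionAt_iteratedDeriv (h : IsBurgersFlow f ν u)
    (hf : ContDiff ℝ (⊤ : ℕ∞) f) (k : ℕ) (ht : 0 < t) (x : ℝ) :
    TransportDiffusionAt ν (deriv f (u t x)) (fun s => iteratedDeriv k (u s))
      (-transportCommutator (deriv f) k (u t) x) t x where
  contDiffAt := (contDiff_infty.1 (iteratedDeriv_eq_iterate (f := u t) ▸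
    (h.contDiff ht.le).iterate_deriv k) 2).contDiffAt
  hasDerivAt := by
    have hu := h.contDiff ht.le
    have hu' : ContDiff ℝ (⊤ : ℕ∞) (deriv (u t)) := (contDiff_infty_iff_deriv.1 hu).2
    have hu'' : ContDiff ℝ (⊤ : ℕ∞) (deriv (deriv (u t))) := (contDiff_infty_iff_deriv.1 hu').2
    have htransport : ContDiff ℝ (⊤ : ℕ∞) fun y => deriv f (u t y) * deriv (u t) y :=
      ((contDiff_infty_iff_deriv.1 hf).2.comp hu).mul hu'
    have htime : (fun y => deriv (fun s => u s y) t) =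
        fun y => ν * deriv (deriv (u t)) y - deriv f (u t y) * deriv (u t) y := funext fun y => by
      linarith [h.pde t ht y]
    have hdiff : iteratedDeriv 2 (iteratedDeriv k (u t)) = iteratedDeriv (k + 2) (u t) := by
      simp only [iteratedDeriv_succ, iteratedDeriv_zero]
    refine (hasDerivAt_iteratedDeriv_of_contDiffOn_uncurry isOpen_Ioi
      (h.contDiffOn.mono (prod_mono_left Ioi_subset_Ici_self)) k ht x).congr_deriv ?_
    rw [htime, iteratedDeriv_fun_sub (contDiff_infty.1 (contDiff_const.mul hu'') k).contDiffAt
      (contDiff_infty.1 htransport k).contDiffAt, iteratedDeriv_const_mul_field,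
      transportCommutator, hdiff, ← iteratedDeriv_succ', ← iteratedDeriv_succ',
      ← iteratedDeriv_succ]
    ring

theorem transportDiffusionAt (h : IsBurgersFlow f ν u) (hf : ContDiff ℝ (⊤ : ℕ∞) f) (ht : 0 < t)
    (x : ℝ) : TransportDiffusionAt ν (deriv f (u t x)) u 0 t x := by
  simpa [transportCommutator_zero] using h.transportDiffusionAt_iteratedDeriv hf 0 ht x

theorem transportDiffusionAt_deriv (h : IsBurgersFlow f ν u) (hf : ContDiff ℝ (⊤ : ℕ∞) f)
    (ht : 0 < t) (x : ℝ) :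
    TransportDiffusionAt ν (deriv f (u t x)) (fun s => deriv (u s))
      (-(iteratedDeriv 2 f (u t x) * deriv (u t) x ^ 2)) t x := by
  have hf' : ContDiff ℝ 1 (deriv f) := contDiff_infty.1 (contDiff_infty_iff_deriv.1 hf).2 1
  have hu : ContDiff ℝ 2 (u t) := contDiff_infty.1 (h.contDiff ht.le) 2
  simpa [transportCommutator_one hf' hu, iteratedDeriv_succ (n := 1)] using
    h.transportDiffusionAt_iteratedDeriv hf 1 ht x

/-- The flux `ν u_x - f(u)` is transported and diffused without source: the quadratic sources of
`ν u_x` and of `f(u)` cancel. -/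
theorem transportDiffusionAt_flux (h : IsBurgersFlow f ν u) (hf : ContDiff ℝ (⊤ : ℕ∞) f)
    (ht : 0 < t) (x : ℝ) :
    TransportDiffusionAt ν (deriv f (u t x)) (fun s y => ν * deriv (u s) y - f (u s y)) 0 t x := by
  convert ((h.transportDiffusionAt_deriv hf ht x).const_mul ν).sub
    ((h.transportDiffusionAt hf ht x).comp (contDiff_infty.1 hf 2).contDiffAt) using 1
  ring

theorem periodic_deriv (h : IsBurgersFlow f ν u) (t : ℝ) : Function.Periodic (deriv (u t)) 1 := by
  simpa using periodic_iteratedDeriv (h.periodic t) 1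

theorem continuousOn_deriv (h : IsBurgersFlow f ν u) :
    ContinuousOn (Function.uncurry fun t => deriv (u t)) (Ici 0 ×ˢ univ) := by
  simpa using h.continuousOn_iteratedDeriv 1

theorem deriv_le (h : IsBurgersFlow f ν u) (hf : ContDiff ℝ (⊤ : ℕ∞) f)
    (hconv : ConvexOn ℝ univ f) (hν : 0 ≤ ν) (hinit : ∀ x, deriv (u 0) x ≤ L) (ht : 0 ≤ t)
    (x : ℝ) : deriv (u t) x ≤ L :=
  le_of_transportDiffusionAt_nonpos hν h.continuousOn_deriv h.periodic_deriv hinit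
    (fun _ hs y => ⟨_, _,
      neg_nonpos.2 (mul_nonneg (iteratedDeriv_two_nonneg_of_convexOn hf hconv _) (sq_nonneg _)),
      h.transportDiffusionAt_deriv hf hs y⟩) ht x

end IsBurgersFlow

/-- A Burgers flow of viscosity at most one whose initial datum and its derivative are bounded by
`D`. The constants of all estimates below depend on the flow only through `f` and `D`. -/
structure IsBoundedBurgersFlow (f : ℝ → ℝ) (D ν : ℝ) (u : ℝ → ℝ → ℝ) : Prop
    extends IsBurgersFlow f ν u where
  viscosity_pos : 0 < ν
  viscosity_le_one : ν ≤ 1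
  abs_init_le : ∀ x, |u 0 x| ≤ D
  abs_deriv_init_le : ∀ x, |deriv (u 0) x| ≤ D

/-- The distance of `u_x` below the level `D + 1`, which it never reaches if `|u_x| ≤ D`
initially. -/
noncomputable def slopeGap (D : ℝ) (u : ℝ → ℝ → ℝ) (t x : ℝ) : ℝ :=
  D + 1 - deriv (u t) x

namespace IsBoundedBurgersFlow

variable {f : ℝ → ℝ} {D ν t : ℝ} {u : ℝ → ℝ → ℝ}

theorem bound_nonneg (h : IsBoundedBurgersFlow f D ν u) : 0 ≤ D :=
  (abs_nonneg _).trans (h.abs_init_le 0)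

theorem abs_le (h : IsBoundedBurgersFlow f D ν u) (hf : ContDiff ℝ (⊤ : ℕ∞) f) (ht : 0 ≤ t)
    (x : ℝ) : |u t x| ≤ D :=
  abs_le_of_transportDiffusionAt_zero h.viscosity_pos.le h.contDiffOn.continuousOn h.periodic
    h.abs_init_le (fun _ hs y => ⟨_, h.transportDiffusionAt hf hs y⟩) ht x

theorem exists_abs_deriv_le (hf : ContDiff ℝ (⊤ : ℕ∞) f) (D : ℝ) :
    ∃ Q ≥ 0, ∀ ν u, IsBoundedBurgersFlow f D ν u → ∀ t ≥ 0, ∀ x, |deriv (u t) x| ≤ Q * ν⁻¹ := by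
  obtain ⟨B, hB⟩ := isCompact_Icc.exists_bound_of_continuousOn (s := Icc (-D) D)
    hf.continuous.continuousOn
  refine ⟨|D| + 2 * |B|, by positivity, fun ν u h t ht x => ?_⟩
  have hfu : ∀ s ≥ 0, ∀ y, |f (u s y)| ≤ |B| := fun s hs y =>
    (hB _ (_root_.abs_le.1 (h.abs_le hf hs y))).trans (le_abs_self B)
  have hflux := abs_le_of_transportDiffusionAt_zero h.viscosity_pos.le (B := |D| + |B|)
    (Ψ := fun s y => ν * deriv (u s) y - f (u s y))
    ((continuousOn_const.mul h.continuousOn_deriv).sub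
      (hf.continuous.comp_continuousOn h.contDiffOn.continuousOn))
    (fun s y => by simp only [h.periodic s y, h.periodic_deriv s y]) (fun y => ?_)
    (fun s hs y => ⟨_, h.transportDiffusionAt_flux hf hs y⟩) ht x
  · rw [← div_eq_mul_inv, le_div_iff₀ h.viscosity_pos]
    calc |deriv (u t) x| * ν = |(ν * deriv (u t) x - f (u t x)) + f (u t x)| := by
          rw [sub_add_cancel, abs_mul, abs_of_pos h.viscosity_pos, mul_comm]
      _ ≤ |D| + |B| + |B| := (abs_add_le _ _).trans (add_le_add hflux (hfu t ht x))
      _ = _ := by ring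
  · refine (abs_sub _ _).trans (add_le_add ?_ (hfu 0 le_rfl y))
    rw [abs_mul, abs_of_pos h.viscosity_pos]
    exact (mul_le_of_le_one_left (abs_nonneg _) h.viscosity_le_one).trans
      ((h.abs_deriv_init_le y).trans (le_abs_self D))

theorem one_le_slopeGap (h : IsBoundedBurgersFlow f D ν u) (hf : ContDiff ℝ (⊤ : ℕ∞) f)
    (hconv : ConvexOn ℝ univ f) (ht : 0 ≤ t) (x : ℝ) : 1 ≤ slopeGap D u t x := by
  have := h.deriv_le hf hconv h.viscosity_pos.le
    (fun y => (le_abs_self _).trans (h.abs_deriv_init_le y)) ht x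
  rw [slopeGap]
  linarith

theorem exists_slopeGap_le (hf : ContDiff ℝ (⊤ : ℕ∞) f) (D : ℝ) :
    ∃ G ≥ 1, ∀ ν u, IsBoundedBurgersFlow f D ν u → ∀ t ≥ 0, ∀ x, slopeGap D u t x ≤ G * ν⁻¹ := by
  obtain ⟨Q, hQ, hbound⟩ := exists_abs_deriv_le hf D
  refine ⟨|D| + 1 + Q, by linarith [abs_nonneg D], fun ν u h t ht x => ?_⟩
  calc slopeGap D u t x ≤ (|D| + 1) * 1 + |deriv (u t) x| := by
        rw [slopeGap]
        linarith [le_abs_self D, neg_abs_le (deriv (u t) x)]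
    _ ≤ (|D| + 1) * ν⁻¹ + Q * ν⁻¹ := by
        gcongr
        · exact one_le_inv₀ h.viscosity_pos |>.2 h.viscosity_le_one
        · exact hbound ν u h t ht x
    _ = _ := by ring

theorem abs_deriv_le_slopeGap (h : IsBoundedBurgersFlow f D ν u) (hf : ContDiff ℝ (⊤ : ℕ∞) f)
    (hconv : ConvexOn ℝ univ f) (ht : 0 ≤ t) (x : ℝ) :
    |deriv (u t) x| ≤ (D + 1) * slopeGap D u t x := by
  have hD := h.bound_nonneg
  have hgap := h.one_le_slopeGap hf hconv ht x
  have hmul := mul_le_mul_of_nonneg_left hgap hD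
  have hdef : slopeGap D u t x = D + 1 - deriv (u t) x := rfl
  refine _root_.abs_le.2 ⟨?_, ?_⟩ <;> linarith

theorem transportDiffusionAt_slopeGap (h : IsBoundedBurgersFlow f D ν u)
    (hf : ContDiff ℝ (⊤ : ℕ∞) f) (ht : 0 < t) (x : ℝ) :
    TransportDiffusionAt ν (deriv f (u t x)) (slopeGap D u)
      (iteratedDeriv 2 f (u t x) * deriv (u t) x ^ 2) t x := by
  have hsub := (TransportDiffusionAt.of_time (hasDerivAt_const t (D + 1))).sub
    (h.transportDiffusionAt_deriv hf ht x)
  rwa [zero_sub, neg_neg] at hsub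

theorem periodic_slopeGap (h : IsBoundedBurgersFlow f D ν u) (t : ℝ) :
    Function.Periodic (slopeGap D u t) 1 := fun x => by
  rw [slopeGap, h.periodic_deriv t x, slopeGap]

theorem continuousOn_slopeGap (h : IsBoundedBurgersFlow f D ν u) :
    ContinuousOn (Function.uncurry (slopeGap D u)) (Ici 0 ×ˢ univ) :=
  continuousOn_const.sub h.continuousOn_deriv

theorem integral_slopeGap (h : IsBoundedBurgersFlow f D ν u) (ht : 0 ≤ t) :
    ∫ x in Ioc (0 : ℝ) 1, slopeGap D u t x = D + 1 := by
  have hu : ContDiff ℝ 1 (u t) := contDiff_infty.1 (h.contDiff ht) 1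
  have hint : IntervalIntegrable (deriv (u t)) volume 0 1 :=
    (hu.continuous_deriv le_rfl).intervalIntegrable 0 1
  have hzero : ∫ x in (0 : ℝ)..1, deriv (u t) x = 0 := by
    rw [intervalIntegral.integral_deriv_eq_sub (fun x _ => hu.differentiable one_ne_zero x) hint,
      sub_eq_zero]
    simpa using h.periodic t 0
  rw [← intervalIntegral.integral_of_le zero_le_one]
  simp only [slopeGap]
  rw [intervalIntegral.integral_sub intervalIntegrable_const hint, hzero]
  simp

end IsBoundedBurgersFlow

/-! ### Weighted Bernstein estimates -/

theorem TransportDiffusionAt.exists_rpow {ν a r t x β : ℝ} {w : ℝ → ℝ → ℝ} (hβ : 0 < β)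
    (hw : 0 < w t x) (hr : 0 ≤ r) (h : TransportDiffusionAt ν a w r t x) :
    ∃ ρ, TransportDiffusionAt ν a (fun s y => w s y ^ β) ρ t x ∧
      ν * ((1 - β) / β) * deriv (fun y => w t y ^ β) x ^ 2 ≤ w t x ^ β * ρ := by
  have hφ : ContDiffAt ℝ 2 (fun z : ℝ => z ^ β) (w t x) :=
    contDiffAt_id.rpow_const_of_ne hw.ne'
  refine ⟨_, h.comp hφ, ?_⟩
  have hβ1 : w t x ^ (β - 1) = w t x ^ β * (w t x)⁻¹ := by
    rw [Real.rpow_sub_one hw.ne', div_eq_mul_inv]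
  have hβ2 : w t x ^ (β - 1 - 1) = w t x ^ β * (w t x)⁻¹ ^ 2 := by
    rw [Real.rpow_sub_one hw.ne', hβ1, div_eq_mul_inv, pow_two, mul_assoc]
  have hderiv2 : iteratedDeriv 2 (fun z : ℝ => z ^ β) (w t x) =
      β * (β - 1) * w t x ^ (β - 1 - 1) := by
    rw [iteratedDeriv_succ, iteratedDeriv_one, Real.deriv_rpow_const', deriv_const_mul_field,
      Real.deriv_rpow_const]
    ring
  have hderiv := (h.contDiffAt.differentiableAt two_ne_zero).hasDerivAt.rpow_const
    (p := β) (Or.inl hw.ne')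
  rw [hderiv.deriv, hderiv2, Real.deriv_rpow_const, hβ1, hβ2]
  have hsource : 0 ≤ w t x ^ β * (β * (w t x ^ β * (w t x)⁻¹) * r) := by positivity
  have hcancel : (1 - β) / β * β ^ 2 = β * (1 - β) := by field_simp
  linear_combination (ν * (deriv (w t) x * (w t x ^ β * (w t x)⁻¹)) ^ 2) * hcancel + hsource

theorem mul_sq_le_of_sum_sq_eq {c d a b a' b' κ y y' : ℝ} (hc : 0 ≤ c) (hd : 0 ≤ d) (hκ : 0 < κ)
    (hy : 0 < y) (heq : c * a ^ 2 + d * b ^ 2 = κ * y ^ 2)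
    (hderiv : c * a * a' + d * b * b' = κ * y * y') :
    κ * y' ^ 2 ≤ c * a' ^ 2 + d * b' ^ 2 := by
  have hcs : (c * a * a' + d * b * b') ^ 2 ≤
      (c * a ^ 2 + d * b ^ 2) * (c * a' ^ 2 + d * b' ^ 2) := by
    nlinarith [mul_nonneg (mul_nonneg hc hd) (sq_nonneg (a * b' - b * a'))]
  rw [hderiv, heq] at hcs
  refine le_of_mul_le_mul_left ?_ (show 0 < κ * y ^ 2 by positivity)
  linarith

theorem weighted_reaction_le {M B Y Λ η a b r₀ r₁ : ℝ} (hM : 0 < M) (hB : 0 ≤ B) (hΛ : 0 ≤ Λ)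
    (hη : η ∈ Icc 0 (1 / 2)) (ha : M * |a| ≤ Y) (hr₀ : |r₀| ≤ B * Y)
    (hr₁ : |r₁| ≤ B * (M * (|b| + Y))) :
    η * (2 * b * r₁) + Λ * M ^ 2 * (2 * a * r₀) ≤
      M * (3 / 2 * B * b ^ 2 + (B / 2 + 2 * Λ * B) * Y ^ 2) := by
  have hY : 0 ≤ Y := (by positivity : 0 ≤ M * |a|).trans ha
  have htop : η * (2 * b * r₁) ≤ M * (3 / 2 * B * b ^ 2 + B / 2 * Y ^ 2) := by
    calc η * (2 * b * r₁) ≤ 2 * η * (|b| * |r₁|) := by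
          have := mul_le_mul_of_nonneg_left (abs_mul b r₁ ▸ le_abs_self (b * r₁)) hη.1
          linarith
      _ ≤ 1 * (|b| * (B * (M * (|b| + Y)))) := by
          gcongr
          linarith [hη.2]
      _ = M * B * (|b| ^ 2 + |b| * Y) := by ring
      _ ≤ M * B * (3 / 2 * |b| ^ 2 + 1 / 2 * Y ^ 2) :=
          mul_le_mul_of_nonneg_left (by nlinarith [sq_nonneg (|b| - Y)]) (by positivity)
      _ = _ := by rw [sq_abs]; ring
  have hlow : Λ * M ^ 2 * (2 * a * r₀) ≤ M * (2 * Λ * B * Y ^ 2) := by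
    calc Λ * M ^ 2 * (2 * a * r₀) ≤ 2 * Λ * M * ((M * |a|) * |r₀|) := by
          have := mul_le_mul_of_nonneg_left (abs_mul a r₀ ▸ le_abs_self (a * r₀))
            (show 0 ≤ 2 * Λ * M ^ 2 by positivity)
          linarith
      _ ≤ 2 * Λ * M * (Y * (B * Y)) := by gcongr
      _ = _ := by ring
  linarith

theorem weighted_source_neg {ν M A B δ Λ K η a b b' y y' r₀ r₁ ρ : ℝ} (hν : 0 < ν) (hM : 0 < M)
    (hνM : 1 ≤ ν * M) (hA : 0 < A) (hB : 0 ≤ B) (hδ : 0 ≤ δ) (hδ1 : δ ≤ 1) (hΛ0 : 0 ≤ Λ)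
    (hΛ : 1 + 3 / 2 * B ≤ 2 * δ * Λ) (hK : B / 2 + 2 * Λ * B < K) (hη : η ∈ Icc 0 (1 / 2))
    (hy : 0 < y) (hρ : ν * δ * y' ^ 2 ≤ y * ρ) (ha : M * |a| ≤ A * y)
    (hr₀ : |r₀| ≤ B * (A * y)) (hr₁ : |r₁| ≤ B * (M * (|b| + A * y)))
    (hcrit : K * A ^ 2 * (1 + η) * y' ^ 2 ≤ η * b' ^ 2 + Λ * M ^ 2 * b ^ 2) :
    η * (2 * b * r₁ - 2 * ν * b' ^ 2) + M * b ^ 2 + Λ * M ^ 2 * (2 * a * r₀ - 2 * ν * b ^ 2)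
      - (K * A ^ 2 * (1 + η) * (2 * y * ρ - 2 * ν * y' ^ 2) + K * A ^ 2 * M * y ^ 2) < 0 := by
  have hK0 : 0 < K := lt_of_le_of_lt (by positivity) hK
  have hη0 : 0 ≤ η := hη.1
  have hreaction := weighted_reaction_le hM hB hΛ0 hη ha hr₀ hr₁
  -- The weight uses up all but the fraction `δ` of the dissipation.
  have hweight : -(K * A ^ 2 * (1 + η) * (2 * y * ρ - 2 * ν * y' ^ 2)) ≤
      2 * ν * (1 - δ) * (η * b' ^ 2 + Λ * M ^ 2 * b ^ 2) := by
    have hρ' := mul_le_mul_of_nonneg_left hρ (show 0 ≤ 2 * (K * A ^ 2 * (1 + η)) by positivity)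
    have hcrit' := mul_le_mul_of_nonneg_left hcrit
      (mul_nonneg (by positivity : 0 ≤ 2 * ν) (sub_nonneg.2 hδ1))
    linarith
  have hdissipation : M * ((1 + 3 / 2 * B) * b ^ 2) ≤
      2 * ν * δ * (η * b' ^ 2 + Λ * M ^ 2 * b ^ 2) := by
    calc M * ((1 + 3 / 2 * B) * b ^ 2) ≤ M * (2 * δ * Λ * b ^ 2) := by gcongr
      _ ≤ M * (2 * δ * Λ * b ^ 2) * (ν * M) := le_mul_of_one_le_right (by positivity) hνM
      _ = 2 * ν * δ * (0 + Λ * M ^ 2 * b ^ 2) := by ring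
      _ ≤ _ := by gcongr; positivity
  have hgrowth : 0 < M * ((K - (B / 2 + 2 * Λ * B)) * (A * y) ^ 2) := by
    have := sub_pos.2 hK
    positivity
  linarith

/-- The Bernstein functional of the weighted estimate: `w₁` with a time cut-off `M (t - t₀)`, the
multiple of `w₀²` whose dissipation controls `w₁²`, and the weight `y` to be compared with. -/
def weightedBernstein (M A Λ K t₀ : ℝ) (w₀ w₁ y : ℝ → ℝ → ℝ) (t x : ℝ) : ℝ :=
  M * (t - t₀) * w₁ t x ^ 2 + Λ * M ^ 2 * w₀ t x ^ 2
    - K * A ^ 2 * (1 + M * (t - t₀)) * y t x ^ 2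

theorem transportDiffusionAt_weightedBernstein {ν a M A Λ K t₀ t x r₀ r₁ ρ : ℝ}
    {w₀ w₁ y : ℝ → ℝ → ℝ} (hw₀ : TransportDiffusionAt ν a w₀ r₀ t x)
    (hw₁ : TransportDiffusionAt ν a w₁ r₁ t x) (hy : TransportDiffusionAt ν a y ρ t x) :
    TransportDiffusionAt ν a (weightedBernstein M A Λ K t₀ w₀ w₁ y)
      (M * (t - t₀) * (2 * w₁ t x * r₁ - 2 * ν * deriv (w₁ t) x ^ 2) + M * w₁ t x ^ 2
        + Λ * M ^ 2 * (2 * w₀ t x * r₀ - 2 * ν * deriv (w₀ t) x ^ 2)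
        - (K * A ^ 2 * (1 + M * (t - t₀)) * (2 * y t x * ρ - 2 * ν * deriv (y t) x ^ 2)
          + K * A ^ 2 * M * y t x ^ 2)) t x := by
  have hη : HasDerivAt (fun s => M * (s - t₀)) M t := by
    simpa using ((hasDerivAt_id t).sub_const t₀).const_mul M
  exact ((hw₁.sq.time_mul hη).add (hw₀.sq.const_mul (Λ * M ^ 2))).sub
    (hy.sq.time_mul ((hη.const_add 1).const_mul (K * A ^ 2)))

theorem deriv_weightedBernstein {M A Λ K t₀ t x : ℝ} {w₀ w₁ y : ℝ → ℝ → ℝ}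
    (hw₀ : DifferentiableAt ℝ (w₀ t) x) (hw₁ : DifferentiableAt ℝ (w₁ t) x)
    (hy : DifferentiableAt ℝ (y t) x) :
    deriv (weightedBernstein M A Λ K t₀ w₀ w₁ y t) x =
      2 * (M * (t - t₀) * w₁ t x * deriv (w₁ t) x + Λ * M ^ 2 * w₀ t x * deriv (w₀ t) x
        - K * A ^ 2 * (1 + M * (t - t₀)) * y t x * deriv (y t) x) := by
  refine (((((hw₁.hasDerivAt.fun_pow 2).const_mul (M * (t - t₀))).fun_add
    ((hw₀.hasDerivAt.fun_pow 2).const_mul (Λ * M ^ 2))).fun_sub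
    ((hy.hasDerivAt.fun_pow 2).const_mul (K * A ^ 2 * (1 + M * (t - t₀))))).deriv).trans ?_
  ring

theorem abs_le_of_weightedBernstein_neg {M A Λ K t₀ t x : ℝ} {w₀ w₁ y : ℝ → ℝ → ℝ}
    (hA : 0 ≤ A) (hΛ : 0 ≤ Λ) (ht : M * (t - t₀) = 1 / 2) (hy : 0 ≤ y t x)
    (hneg : weightedBernstein M A Λ K t₀ w₀ w₁ y t x < 0) :
    |w₁ t x| ≤ √(3 * K) * (A * y t x) := by
  have hw₀ : 0 ≤ Λ * M ^ 2 * w₀ t x ^ 2 := by positivity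
  rw [weightedBernstein, ht] at hneg
  calc |w₁ t x| ≤ √(3 * K * (A * y t x) ^ 2) := Real.abs_le_sqrt (by linarith)
    _ = _ := by rw [Real.sqrt_mul' _ (sq_nonneg _), Real.sqrt_sq (mul_nonneg hA hy)]

/-- The setting of the weighted Bernstein estimate on a time interval `[t₀, t₁]` of length
`1 / (2 M)`: a function `w₀` with spatial derivative `w₁`, both transported and diffused along with
a positive weight `y`, where `A y` bounds `M w₀` and the sources, up to the constant `B` and a term
linear in `w₁`. The constant `δ` measures how much of its own dissipation the source of `y`
absorbs. -/
structure WeightedBernsteinSetting (ν M A B δ t₀ t₁ : ℝ) (w₀ w₁ y : ℝ → ℝ → ℝ) : Prop where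
  viscosity_pos : 0 < ν
  scale_pos : 0 < M
  one_le_mul : 1 ≤ ν * M
  amplitude_pos : 0 < A
  length : M * (t₁ - t₀) = 1 / 2
  continuousOn_fst : ContinuousOn (Function.uncurry w₀) (Icc t₀ t₁ ×ˢ univ)
  continuousOn_snd : ContinuousOn (Function.uncurry w₁) (Icc t₀ t₁ ×ˢ univ)
  continuousOn_weight : ContinuousOn (Function.uncurry y) (Icc t₀ t₁ ×ˢ univ)
  periodic_fst : ∀ t, Function.Periodic (w₀ t) 1
  periodic_snd : ∀ t, Function.Periodic (w₁ t) 1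
  periodic_weight : ∀ t, Function.Periodic (y t) 1
  deriv_fst : ∀ t, deriv (w₀ t) = w₁ t
  weight_pos : ∀ t ∈ Icc t₀ t₁, ∀ x, 0 < y t x
  mul_abs_fst_le : ∀ t ∈ Icc t₀ t₁, ∀ x, M * |w₀ t x| ≤ A * y t x
  transport : ∀ t ∈ Ioc t₀ t₁, ∀ x, ∃ a r₀ r₁ ρ, TransportDiffusionAt ν a w₀ r₀ t x ∧
    TransportDiffusionAt ν a w₁ r₁ t x ∧ TransportDiffusionAt ν a y ρ t x ∧
    |r₀| ≤ B * (A * y t x) ∧ |r₁| ≤ B * (M * (|w₁ t x| + A * y t x)) ∧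
    ν * δ * deriv (y t) x ^ 2 ≤ y t x * ρ

namespace WeightedBernsteinSetting

variable {ν M A B δ Λ K t₀ t₁ : ℝ} {w₀ w₁ y : ℝ → ℝ → ℝ}

theorem lt (h : WeightedBernsteinSetting ν M A B δ t₀ t₁ w₀ w₁ y) : t₀ < t₁ :=
  sub_pos.1 (pos_of_mul_pos_right (h.length ▸ one_half_pos) h.scale_pos.le)

theorem source_neg (h : WeightedBernsteinSetting ν M A B δ t₀ t₁ w₀ w₁ y) (hB : 0 ≤ B)
    (hδ : 0 ≤ δ) (hδ1 : δ ≤ 1) (hΛ0 : 0 ≤ Λ) (hΛ : 1 + 3 / 2 * B ≤ 2 * δ * Λ)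
    (hK : B / 2 + 2 * Λ * B < K) {t : ℝ} (ht : t ∈ Ioc t₀ t₁) {x : ℝ}
    (hzero : weightedBernstein M A Λ K t₀ w₀ w₁ y t x = 0)
    (hcrit : deriv (weightedBernstein M A Λ K t₀ w₀ w₁ y t) x = 0) :
    ∃ a, ∃ r < 0, TransportDiffusionAt ν a (weightedBernstein M A Λ K t₀ w₀ w₁ y) r t x := by
  obtain ⟨a, r₀, r₁, ρ, hw₀, hw₁, hy, hr₀, hr₁, hρ⟩ := h.transport t ht x
  have htI : t ∈ Icc t₀ t₁ := Ioc_subset_Icc_self ht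
  have hM := h.scale_pos
  have hA := h.amplitude_pos
  have hK0 : 0 < K := lt_of_le_of_lt (by positivity) hK
  have hη : M * (t - t₀) ∈ Icc 0 (1 / 2) :=
    ⟨mul_nonneg hM.le (sub_nonneg.2 ht.1.le), h.length ▸ by gcongr; exact ht.2⟩
  have hη1 : 0 < 1 + M * (t - t₀) := by linarith [hη.1]
  rw [deriv_weightedBernstein (hw₀.contDiffAt.differentiableAt two_ne_zero)
    (hw₁.contDiffAt.differentiableAt two_ne_zero) (hy.contDiffAt.differentiableAt two_ne_zero)]
    at hcrit
  have hweight := mul_sq_le_of_sum_sq_eq hη.1 (by positivity : 0 ≤ Λ * M ^ 2)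
    (by positivity : 0 < K * A ^ 2 * (1 + M * (t - t₀))) (h.weight_pos t htI x)
    (sub_eq_zero.1 hzero) (sub_eq_zero.1 <| (mul_eq_zero.1 hcrit).resolve_left two_ne_zero)
  refine ⟨a, _, ?_, transportDiffusionAt_weightedBernstein hw₀ hw₁ hy⟩
  rw [h.deriv_fst] at hweight ⊢
  exact weighted_source_neg h.viscosity_pos hM h.one_le_mul hA hB hδ hδ1 hΛ0 hΛ hK hη
    (h.weight_pos t htI x) hρ (h.mul_abs_fst_le t htI x) hr₀ hr₁ hweight

theorem weightedBernstein_init_neg (h : WeightedBernsteinSetting ν M A B δ t₀ t₁ w₀ w₁ y)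
    (hΛ : 0 ≤ Λ) (hK : Λ < K) (x : ℝ) : weightedBernstein M A Λ K t₀ w₀ w₁ y t₀ x < 0 := by
  have ht₀ : t₀ ∈ Icc t₀ t₁ := left_mem_Icc.2 h.lt.le
  have hAy : 0 < A * y t₀ x := mul_pos h.amplitude_pos (h.weight_pos t₀ ht₀ x)
  have hM := h.scale_pos
  rw [weightedBernstein, sub_self, mul_zero, zero_mul, zero_add, add_zero, mul_one, sub_neg]
  calc Λ * M ^ 2 * w₀ t₀ x ^ 2 = Λ * (M * |w₀ t₀ x|) ^ 2 := by rw [mul_pow, sq_abs]; ring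
    _ ≤ Λ * (A * y t₀ x) ^ 2 := by
        gcongr ?_ * ?_ ^ 2
        exact h.mul_abs_fst_le t₀ ht₀ x
    _ < K * (A * y t₀ x) ^ 2 := by gcongr
    _ = _ := by ring

theorem continuousOn_weightedBernstein (h : WeightedBernsteinSetting ν M A B δ t₀ t₁ w₀ w₁ y) :
    ContinuousOn (Function.uncurry (weightedBernstein M A Λ K t₀ w₀ w₁ y))
      (Icc t₀ t₁ ×ˢ univ) := by
  have hη : ContinuousOn (fun q : ℝ × ℝ => M * (q.1 - t₀)) (Icc t₀ t₁ ×ˢ univ) := by fun_prop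
  exact ((hη.mul (h.continuousOn_snd.pow 2)).add
    (continuousOn_const.mul (h.continuousOn_fst.pow 2))).sub
    ((continuousOn_const.mul (continuousOn_const.add hη)).mul (h.continuousOn_weight.pow 2))

theorem exists_abs_le {B δ : ℝ} (hB : 0 ≤ B) (hδ : 0 < δ) (hδ1 : δ ≤ 1) :
    ∃ C ≥ 0, ∀ ν M A t₀ t₁ w₀ w₁ y, WeightedBernsteinSetting ν M A B δ t₀ t₁ w₀ w₁ y →
      ∀ x, |w₁ t₁ x| ≤ C * (A * y t₁ x) := by
  obtain ⟨Λ, hΛ0, hΛ⟩ : ∃ Λ ≥ 0, 1 + 3 / 2 * B ≤ 2 * δ * Λ :=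
    ⟨(1 + 3 / 2 * B) / (2 * δ), by positivity, (mul_div_cancel₀ _ (by positivity)).ge⟩
  obtain ⟨K, hK⟩ := exists_gt (B / 2 + 2 * Λ * B + Λ)
  have hΛB : 0 ≤ 2 * Λ * B := by positivity
  refine ⟨√(3 * K), by positivity, fun ν M A t₀ t₁ w₀ w₁ y h x => ?_⟩
  have ht₁ : t₁ ∈ Icc t₀ t₁ := right_mem_Icc.2 h.lt.le
  refine abs_le_of_weightedBernstein_neg (w₀ := w₀) h.amplitude_pos.le hΛ0 h.length
    (h.weight_pos t₁ ht₁ x).le ?_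
  exact neg_of_transportDiffusionAt_touching h.viscosity_pos.le h.continuousOn_weightedBernstein
    (fun t x => by
      simp only [weightedBernstein, h.periodic_fst t x, h.periodic_snd t x, h.periodic_weight t x])
    (h.weightedBernstein_init_neg hΛ0 (by linarith))
    (fun t ht x => h.source_neg hB hδ.le hδ1 hΛ0 hΛ (by linarith) ht) t₁ ht₁ x

end WeightedBernsteinSetting

/-! ### Pointwise bounds on the higher derivatives -/

/-- The inverse `max ν⁻¹ t⁻¹` of the length scale `min ν t` below which a Burgers flow of
viscosity `ν` is smooth at time `t`. -/
noncomputable def inverseScale (ν t : ℝ) : ℝ :=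
  max ν⁻¹ t⁻¹

section InverseScale

variable {ν s t : ℝ}

theorem inverseScale_pos (hν : 0 < ν) : 0 < inverseScale ν t :=
  lt_max_of_lt_left (inv_pos.2 hν)

theorem one_le_mul_inverseScale (hν : 0 < ν) : 1 ≤ ν * inverseScale ν t :=
  (inv_le_iff_one_le_mul₀' hν).1 (le_max_left _ _)

theorem half_le_of_sub_le (ht : 0 < t) (hs : t - 1 / (2 * inverseScale ν t) ≤ s) : t / 2 ≤ s := by
  have hscale : 1 / (2 * inverseScale ν t) ≤ 1 / (2 * t⁻¹) := by
    gcongr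
    exact le_max_right _ _
  have : 1 / (2 * t⁻¹) = t / 2 := by field_simp
  linarith

theorem inverseScale_le_inverseScale (hs : 0 < s) (hst : s ≤ t) :
    inverseScale ν t ≤ inverseScale ν s :=
  max_le_max le_rfl (inv_anti₀ hs hst)

theorem inverseScale_le_two_mul (hν : 0 < ν) (ht : 0 < t) (hs : t / 2 ≤ s) :
    inverseScale ν s ≤ 2 * inverseScale ν t := by
  refine max_le ((le_max_left _ _).trans (le_mul_of_one_le_left (inverseScale_pos hν).le
    one_le_two)) ?_
  calc s⁻¹ ≤ (t / 2)⁻¹ := inv_anti₀ (half_pos ht) hs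
    _ = 2 * t⁻¹ := by rw [inv_div, div_eq_mul_inv]
    _ ≤ _ := by gcongr; exact le_max_right _ _

theorem max_rpow_neg_eq_inverseScale_rpow (hν : 0 < ν) (ht : 0 < t) {γ : ℝ} (hγ : 0 ≤ γ) :
    max (ν ^ (-γ)) (t ^ (-γ)) = inverseScale ν t ^ γ := by
  rw [Real.rpow_neg hν.le, Real.rpow_neg ht.le, ← Real.inv_rpow hν.le, ← Real.inv_rpow ht.le]
  exact ((Real.monotoneOn_rpow_Ici_of_exponent_nonneg hγ).map_max
    (inv_nonneg.2 hν.le) (inv_nonneg.2 ht.le)).symm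

end InverseScale

theorem rpow_le_rpow_sub_mul_rpow {z G q c : ℝ} (hz : 0 < z) (hzG : z ≤ G) (hqc : q ≤ c) :
    z ^ c ≤ G ^ (c - q) * z ^ q := by
  calc z ^ c = z ^ (c - q) * z ^ q := by rw [← Real.rpow_add hz, sub_add_cancel]
    _ ≤ _ := by gcongr

theorem DerivBoundAt.of_scale_le {Y M M' x : ℝ} {n : ℕ} {v : ℝ → ℝ}
    (h : DerivBoundAt Y M' n v x) (hY : 0 ≤ Y) (hM' : 0 ≤ M') (hM : M' ≤ 2 * M) :
    DerivBoundAt (2 ^ n * Y) M n v x := fun j hj hjn => by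
  have hM0 : 0 ≤ M := by linarith
  calc |iteratedDeriv j v x| ≤ Y * M' ^ j := h j hj hjn
    _ ≤ Y * (2 * M) ^ j := by gcongr
    _ = 2 ^ j * Y * M ^ j := by ring
    _ ≤ 2 ^ n * Y * M ^ j := by gcongr; exact one_le_two

theorem DerivBoundAt.succ {Y M x : ℝ} {n : ℕ} {v : ℝ → ℝ} (h : DerivBoundAt Y M n v x)
    (hn : |iteratedDeriv (n + 1) v x| ≤ Y * M ^ (n + 1)) : DerivBoundAt Y M (n + 1) v x :=
  fun j hj hjn => (Nat.le_succ_iff.1 hjn).elim (h j hj) fun hj' => hj' ▸ hn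

/-- The weight `(slopeGap / M) ^ β` of the estimates below. For `β < 1` its own diffusion absorbs
part of the dissipation, and its `L^(1/β)` norm is at most of order `M ^ (-β)`, since `slopeGap`
has bounded mean. -/
noncomputable def gapWeight (D β M : ℝ) (u : ℝ → ℝ → ℝ) (t x : ℝ) : ℝ :=
  (slopeGap D u t x / M) ^ β

namespace IsBoundedBurgersFlow

variable {f : ℝ → ℝ} {D ν β M t : ℝ} {u : ℝ → ℝ → ℝ}

theorem gapWeight_pos (h : IsBoundedBurgersFlow f D ν u) (hf : ContDiff ℝ (⊤ : ℕ∞) f)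
    (hconv : ConvexOn ℝ univ f) (hM : 0 < M) (ht : 0 ≤ t) (x : ℝ) : 0 < gapWeight D β M u t x :=
  Real.rpow_pos_of_pos (div_pos (one_pos.trans_le (h.one_le_slopeGap hf hconv ht x)) hM) β

theorem periodic_gapWeight (h : IsBoundedBurgersFlow f D ν u) (t : ℝ) :
    Function.Periodic (gapWeight D β M u t) 1 := fun x => by
  rw [gapWeight, h.periodic_slopeGap t x, gapWeight]

theorem continuousOn_gapWeight (h : IsBoundedBurgersFlow f D ν u) (hβ : 0 ≤ β) :
    ContinuousOn (Function.uncurry (gapWeight D β M u)) (Ici 0 ×ˢ univ) :=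
  (h.continuousOn_slopeGap.div_const M).rpow_const fun _ _ => Or.inr hβ

theorem exists_transportDiffusionAt_gapWeight (h : IsBoundedBurgersFlow f D ν u)
    (hf : ContDiff ℝ (⊤ : ℕ∞) f) (hconv : ConvexOn ℝ univ f) (hβ : 0 < β) (hM : 0 < M)
    (ht : 0 < t) (x : ℝ) :
    ∃ ρ, TransportDiffusionAt ν (deriv f (u t x)) (gapWeight D β M u) ρ t x ∧
      ν * ((1 - β) / β) * deriv (gapWeight D β M u t) x ^ 2 ≤ gapWeight D β M u t x * ρ := by
  have hgap := one_pos.trans_le (h.one_le_slopeGap hf hconv ht.le x)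
  have hsource := mul_nonneg (iteratedDeriv_two_nonneg_of_convexOn hf hconv (u t x))
    (sq_nonneg (deriv (u t) x))
  have hscaled := (h.transportDiffusionAt_slopeGap hf ht x).const_mul M⁻¹
  have hpow := hscaled.exists_rpow hβ (by positivity) (by positivity)
  have hweight : gapWeight D β M u = fun s y => (M⁻¹ * slopeGap D u s y) ^ β := by
    simp only [funext_iff, gapWeight, div_eq_inv_mul, implies_true]
  exact hweight ▸ hpow

theorem exists_slopeGap_div_le (hf : ContDiff ℝ (⊤ : ℕ∞) f) (D : ℝ) :
    ∃ G ≥ 1, ∀ ν u, IsBoundedBurgersFlow f D ν u → ∀ M ≥ ν⁻¹, ∀ t ≥ 0, ∀ x,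
      slopeGap D u t x / M ≤ G := by
  obtain ⟨G, hG, hgap⟩ := exists_slopeGap_le hf D
  refine ⟨G, hG, fun ν u h M hM t ht x => ?_⟩
  have hM0 : 0 < M := (inv_pos.2 h.viscosity_pos).trans_le hM
  exact (div_le_iff₀ hM0).2 ((hgap ν u h t ht x).trans (by gcongr))

theorem derivBoundAt_of_mem_Icc {n : ℕ} {C : ℝ} (h : IsBoundedBurgersFlow f D ν u)
    (hf : ContDiff ℝ (⊤ : ℕ∞) f) (hconv : ConvexOn ℝ univ f) (hβ : 0 ≤ β) (hC : 0 ≤ C)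
    (hbound : ∀ s > 0, ∀ x,
      DerivBoundAt (C * gapWeight D β (inverseScale ν s) u s x) (inverseScale ν s) n (u s) x)
    (ht : 0 < t) {s : ℝ} (hs : s ∈ Icc (t / 2) t) (x : ℝ) :
    DerivBoundAt (2 ^ n * C * gapWeight D β (inverseScale ν t) u s x) (inverseScale ν t) n
      (u s) x := by
  have hs0 : 0 < s := (half_pos ht).trans_le hs.1
  have hM := inverseScale_pos (t := t) h.viscosity_pos
  have hMs := inverseScale_pos (t := s) h.viscosity_pos
  have hgap := one_pos.trans_le (h.one_le_slopeGap hf hconv hs0.le x)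
  refine ((hbound s hs0 x).of_scale_le (mul_nonneg hC (h.gapWeight_pos hf hconv hMs hs0.le x).le)
    hMs.le (inverseScale_le_two_mul h.viscosity_pos ht hs.1)).mono hM.le ?_ le_rfl
  rw [mul_assoc]
  unfold gapWeight
  gcongr
  exact inverseScale_le_inverseScale hs0 hs.2

theorem weightedBernsteinSetting_iteratedDeriv {n : ℕ} {A B : ℝ}
    (h : IsBoundedBurgersFlow f D ν u) (hf : ContDiff ℝ (⊤ : ℕ∞) f) (hconv : ConvexOn ℝ univ f)
    (hβ : 0 < β) (ht : 0 < t) (hM : M = inverseScale ν t) (hA : 0 < A)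
    (hlow : ∀ s ∈ Icc (t / 2) t, ∀ x, M * |iteratedDeriv n (u s) x| ≤ A * gapWeight D β M u s x)
    (hcomm₀ : ∀ s ∈ Icc (t / 2) t, ∀ x,
      |transportCommutator (deriv f) n (u s) x| ≤ B * (A * gapWeight D β M u s x))
    (hcomm₁ : ∀ s ∈ Icc (t / 2) t, ∀ x, |transportCommutator (deriv f) (n + 1) (u s) x| ≤
      B * (M * (|iteratedDeriv (n + 1) (u s) x| + A * gapWeight D β M u s x))) :
    WeightedBernsteinSetting ν M A B ((1 - β) / β) (t - 1 / (2 * M)) t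
      (fun s => iteratedDeriv n (u s)) (fun s => iteratedDeriv (n + 1) (u s))
      (gapWeight D β M u) := by
  have hM0 : 0 < M := hM ▸ inverseScale_pos h.viscosity_pos
  have hwindow : Icc (t - 1 / (2 * M)) t ⊆ Icc (t / 2) t := fun s hs =>
    ⟨half_le_of_sub_le (ν := ν) ht (hM ▸ hs.1), hs.2⟩
  have hpos : ∀ s ∈ Icc (t / 2) t, 0 < s := fun s hs => (half_pos ht).trans_le hs.1
  have hdomain : Icc (t - 1 / (2 * M)) t ×ˢ univ ⊆ Ici (0 : ℝ) ×ˢ (univ : Set ℝ) :=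
    prod_mono_left fun s hs => (hpos s (hwindow hs)).le
  exact {
    viscosity_pos := h.viscosity_pos
    scale_pos := hM0
    one_le_mul := hM ▸ one_le_mul_inverseScale h.viscosity_pos
    amplitude_pos := hA
    length := by field_simp; ring
    continuousOn_fst := (h.continuousOn_iteratedDeriv n).mono hdomain
    continuousOn_snd := (h.continuousOn_iteratedDeriv (n + 1)).mono hdomain
    continuousOn_weight := (h.continuousOn_gapWeight hβ.le).mono hdomain
    periodic_fst := fun s => periodic_iteratedDeriv (h.periodic s) n
    periodic_snd := fun s => periodic_iteratedDeriv (h.periodic s) (n + 1)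
    periodic_weight := h.periodic_gapWeight
    deriv_fst := fun s => iteratedDeriv_succ.symm
    weight_pos := fun s hs => h.gapWeight_pos hf hconv hM0 (hpos s (hwindow hs)).le
    mul_abs_fst_le := fun s hs => hlow s (hwindow hs)
    transport := fun s hs x => by
      have hs' := hwindow (Ioc_subset_Icc_self hs)
      have hs0 := hpos s hs'
      obtain ⟨ρ, hρ, hρ'⟩ := h.exists_transportDiffusionAt_gapWeight hf hconv hβ hM0 hs0 x
      exact ⟨_, _, _, ρ, h.transportDiffusionAt_iteratedDeriv hf n hs0 x,
        h.transportDiffusionAt_iteratedDeriv hf (n + 1) hs0 x, hρ,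
        (abs_neg _).trans_le (hcomm₀ s hs' x), (abs_neg _).trans_le (hcomm₁ s hs' x), hρ'⟩ }

theorem exists_abs_deriv_le_gapWeight (hf : ContDiff ℝ (⊤ : ℕ∞) f) (hconv : ConvexOn ℝ univ f)
    (D : ℝ) (hβ1 : β ≤ 1) :
    ∃ C ≥ 0, ∀ ν u, IsBoundedBurgersFlow f D ν u → ∀ t > 0, ∀ x, |deriv (u t) x| ≤
      C * gapWeight D β (inverseScale ν t) u t x * inverseScale ν t := by
  obtain ⟨G, hG, hgap⟩ := exists_slopeGap_div_le hf D
  refine ⟨(|D| + 1) * G ^ (1 - β), by positivity, fun ν u h t ht x => ?_⟩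
  have hM := inverseScale_pos (t := t) h.viscosity_pos
  have hz : 0 < slopeGap D u t x / inverseScale ν t :=
    div_pos (one_pos.trans_le (h.one_le_slopeGap hf hconv ht.le x)) hM
  calc |deriv (u t) x| ≤ (D + 1) * slopeGap D u t x := h.abs_deriv_le_slopeGap hf hconv ht.le x
    _ = (D + 1) * (slopeGap D u t x / inverseScale ν t) ^ (1 : ℝ) * inverseScale ν t := by
        rw [Real.rpow_one]
        field_simp
    _ ≤ (|D| + 1) * (G ^ (1 - β) * gapWeight D β (inverseScale ν t) u t x) *
          inverseScale ν t := by
        gcongr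
        · exact le_abs_self D
        · exact rpow_le_rpow_sub_mul_rpow hz (hgap ν u h _ (le_max_left _ _) t ht.le x) hβ1
    _ = _ := by ring

theorem exists_abs_transportCommutator_le_gapWeight {n k : ℕ} {C : ℝ}
    (hf : ContDiff ℝ (⊤ : ℕ∞) f) (hconv : ConvexOn ℝ univ f) (hβ : 0 ≤ β) (hn : 1 ≤ n)
    (hkn : k ≤ n + 1) (hC : 0 ≤ C)
    (hbound : ∀ ν u, IsBoundedBurgersFlow f D ν u → ∀ t > 0, ∀ x,
      DerivBoundAt (C * gapWeight D β (inverseScale ν t) u t x) (inverseScale ν t) n (u t) x) :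
    ∃ c ≥ 0, ∀ ν u, IsBoundedBurgersFlow f D ν u → ∀ t > 0, ∀ s ∈ Icc (t / 2) t, ∀ x,
      |transportCommutator (deriv f) k (u s) x| ≤
        c * (inverseScale ν t * |iteratedDeriv k (u s) x| + inverseScale ν t ^ (k + 1) *
          (2 ^ n * C * gapWeight D β (inverseScale ν t) u s x)) := by
  obtain ⟨G, hG, hgap⟩ := exists_slopeGap_div_le hf D
  obtain ⟨c, hc, hcomm⟩ := exists_abs_transportCommutator_le
    (contDiff_infty.1 (contDiff_infty_iff_deriv.1 hf).2 k) D
    (le_max_left 1 (2 ^ n * C * G ^ β)) hkn hn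
  refine ⟨c, hc, fun ν u h t ht s hs x => ?_⟩
  have hs0 : 0 < s := (half_pos ht).trans_le hs.1
  have hM := inverseScale_pos (t := t) h.viscosity_pos
  have hgap0 := one_pos.trans_le (h.one_le_slopeGap hf hconv hs0.le x)
  refine hcomm (u s) (mod_cast contDiff_infty.1 (h.contDiff hs0.le) (k + 1)) x _ _ hM.le
    (mul_nonneg (by positivity) (h.gapWeight_pos hf hconv hM hs0.le x).le)
    (le_max_of_le_right ?_) (h.abs_le hf hs0.le x)
    (h.derivBoundAt_of_mem_Icc hf hconv hβ hC (hbound ν u h) ht hs x)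
  unfold gapWeight
  gcongr
  exact hgap ν u h _ (le_max_left _ _) s hs0.le x

theorem exists_abs_iteratedDeriv_succ_le_gapWeight {n : ℕ} {C : ℝ}
    (hf : ContDiff ℝ (⊤ : ℕ∞) f) (hconv : ConvexOn ℝ univ f) (hβ : 1 / 2 ≤ β) (hβ1 : β < 1)
    (hn : 1 ≤ n) (hC : 0 < C)
    (hbound : ∀ ν u, IsBoundedBurgersFlow f D ν u → ∀ t > 0, ∀ x,
      DerivBoundAt (C * gapWeight D β (inverseScale ν t) u t x) (inverseScale ν t) n (u t) x) :
    ∃ C' ≥ 0, ∀ ν u, IsBoundedBurgersFlow f D ν u → ∀ t > 0, ∀ x,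
      |iteratedDeriv (n + 1) (u t) x| ≤
        C' * gapWeight D β (inverseScale ν t) u t x * inverseScale ν t ^ (n + 1) := by
  have hβ0 : 0 < β := by linarith
  obtain ⟨c₀, hc₀, hcomm₀⟩ := exists_abs_transportCommutator_le_gapWeight hf hconv hβ0.le
    hn n.le_succ hC.le hbound
  obtain ⟨c₁, hc₁, hcomm₁⟩ := exists_abs_transportCommutator_le_gapWeight hf hconv hβ0.le
    hn le_rfl hC.le hbound
  obtain ⟨K, hK, hbernstein⟩ := WeightedBernsteinSetting.exists_abs_le (B := 2 * c₀ + c₁)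
    (by positivity) (div_pos (sub_pos.2 hβ1) hβ0) ((div_le_one hβ0).2 (by linarith))
  refine ⟨K * (2 ^ n * C), by positivity, fun ν u h t ht x => ?_⟩
  obtain ⟨M, hMdef⟩ : ∃ M, M = inverseScale ν t := ⟨_, rfl⟩
  have hM : 0 < M := hMdef ▸ inverseScale_pos h.viscosity_pos
  have hweight : ∀ s ∈ Icc (t / 2) t, ∀ y, 0 < gapWeight D β M u s y := fun s hs =>
    h.gapWeight_pos hf hconv hM ((half_pos ht).trans_le hs.1).le
  have hlow : ∀ s ∈ Icc (t / 2) t, ∀ y,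
      M * |iteratedDeriv n (u s) y| ≤ 2 ^ n * C * M ^ (n + 1) * gapWeight D β M u s y := by
    intro s hs y
    calc M * |iteratedDeriv n (u s) y| ≤ M * (2 ^ n * C * gapWeight D β M u s y * M ^ n) := by
          gcongr
          exact hMdef ▸ h.derivBoundAt_of_mem_Icc hf hconv hβ0.le hC.le (hbound ν u h) ht hs y n
            hn le_rfl
      _ = _ := by ring
  rw [← hMdef]
  refine (hbernstein ν M (2 ^ n * C * M ^ (n + 1)) _ t _ _ _
    (h.weightedBernsteinSetting_iteratedDeriv hf hconv hβ0 ht hMdef (by positivity) hlow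
      (fun s hs y => ?_) (fun s hs y => ?_)) x).trans_eq (by ring)
  · have hy := hweight s hs y
    refine (hMdef ▸ hcomm₀ ν u h t ht s hs y).trans ?_
    have hsum := mul_le_mul_of_nonneg_left (hlow s hs y) hc₀
    have hrest : 0 ≤ c₁ * (2 ^ n * C * M ^ (n + 1) * gapWeight D β M u s y) := by positivity
    linarith
  · have hy := hweight s hs y
    refine (hMdef ▸ hcomm₁ ν u h t ht s hs y).trans ?_
    have hrest : 0 ≤ 2 * c₀ * (M * (|iteratedDeriv (n + 1) (u s) y| +
      2 ^ n * C * M ^ (n + 1) * gapWeight D β M u s y)) := by positivity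
    rw [pow_succ M (n + 1)]
    linarith

theorem exists_derivBoundAt_gapWeight (hf : ContDiff ℝ (⊤ : ℕ∞) f) (hconv : ConvexOn ℝ univ f)
    (D : ℝ) (hβ : 1 / 2 ≤ β) (hβ1 : β < 1) (n : ℕ) :
    ∃ C > 0, ∀ ν u, IsBoundedBurgersFlow f D ν u → ∀ t > 0, ∀ x,
      DerivBoundAt (C * gapWeight D β (inverseScale ν t) u t x) (inverseScale ν t) n (u t) x := by
  induction n with
  | zero => exact ⟨1, one_pos, fun ν u _ t _ x j hj hj0 => by omega⟩
  | succ n ih =>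
    obtain ⟨C, hC, hlow⟩ := ih
    obtain ⟨C', hC', htop⟩ : ∃ C' ≥ 0, ∀ ν u, IsBoundedBurgersFlow f D ν u → ∀ t > 0, ∀ x,
        |iteratedDeriv (n + 1) (u t) x| ≤
          C' * gapWeight D β (inverseScale ν t) u t x * inverseScale ν t ^ (n + 1) := by
      rcases n.eq_zero_or_pos with rfl | hn
      · simpa using exists_abs_deriv_le_gapWeight hf hconv D hβ1.le
      · exact exists_abs_iteratedDeriv_succ_le_gapWeight hf hconv hβ hβ1 hn hC hlow
    refine ⟨C + C', by positivity, fun ν u h t ht x => ?_⟩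
    have hM := inverseScale_pos (t := t) h.viscosity_pos
    have hweight := h.gapWeight_pos (β := β) hf hconv hM ht.le x
    refine ((hlow ν u h t ht x).mono hM.le ?_ le_rfl).succ ((htop ν u h t ht x).trans ?_) <;>
      gcongr <;> linarith

end IsBoundedBurgersFlow

/-! ### Norms over one period -/

theorem eLpNorm_le_of_abs_le_rpow {α : Type*} [MeasurableSpace α] {μ : Measure α}
    {w y : α → ℝ} {p : ℝ≥0∞} {B : ℝ} (hp : p ≠ 0) (hB : 0 ≤ B) (hy : ∀ a, 0 ≤ y a)
    (hint : Integrable y μ) (hw : ∀ᵐ a ∂μ, |w a| ≤ B * y a ^ (1 / p).toReal) :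
    (eLpNorm w p μ).toReal ≤ B * (∫ a, y a ∂μ) ^ (1 / p).toReal := by
  have hI : 0 ≤ ∫ a, y a ∂μ := integral_nonneg hy
  refine ENNReal.toReal_le_of_le_ofReal (by positivity) ?_
  rcases eq_or_ne p ⊤ with rfl | hp_top
  · simp only [one_div, ENNReal.inv_top, ENNReal.toReal_zero, Real.rpow_zero, mul_one] at hw ⊢
    rw [eLpNorm_exponent_top]
    exact eLpNormEssSup_le_of_ae_bound hw
  · have hq : 0 < (1 / p).toReal := by
      simpa using ENNReal.toReal_pos hp hp_top
    have hpq : p * ENNReal.ofReal (1 / p).toReal = 1 := by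
      rw [ENNReal.ofReal_toReal (by simp [hp]), ENNReal.mul_div_cancel hp hp_top]
    have hnorm : eLpNorm (fun a => ‖y a‖ ^ (1 / p).toReal) p μ =
        ENNReal.ofReal ((∫ a, y a ∂μ) ^ (1 / p).toReal) := by
      rw [eLpNorm_norm_rpow y hq, hpq, eLpNorm_one_eq_lintegral_enorm,
        ← ofReal_integral_norm_eq_lintegral_enorm hint, ENNReal.ofReal_rpow_of_nonneg
          (integral_nonneg fun _ => norm_nonneg _) hq.le]
      simp only [Real.norm_of_nonneg (hy _)]
    rw [ENNReal.ofReal_mul hB, ← hnorm]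
    refine eLpNorm_le_mul_eLpNorm_of_ae_le_mul (hw.mono fun a ha => ?_) p
    rwa [Real.norm_of_nonneg (hy a), Real.norm_of_nonneg (Real.rpow_nonneg (hy a) _)]

theorem toReal_one_div_le_one {p : ℝ≥0∞} (hp : 1 ≤ p) : (1 / p).toReal ≤ 1 :=
  ENNReal.toReal_le_of_le_ofReal zero_le_one (by simpa using hp)

theorem abs_le_toReal_eLpNorm_top {v : ℝ → ℝ} {a b x : ℝ} (hv : Continuous v)
    (hx : x ∈ Ioc a b) : |v x| ≤ (eLpNorm v ⊤ (volume.restrict (Ioc a b))).toReal := by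
  set S := (eLpNorm v ⊤ (volume.restrict (Ioc a b))).toReal
  obtain ⟨B, hB⟩ := (isCompact_Icc (a := a) (b := b)).exists_bound_of_continuousOn hv.continuousOn
  have hfinite : eLpNorm v ⊤ (volume.restrict (Ioc a b)) < ⊤ :=
    eLpNormEssSup_lt_top_of_ae_bound (ae_restrict_of_forall_mem measurableSet_Ioc
      fun y hy => hB y (Ioc_subset_Icc_self hy))
  have hae : (fun y => max |v y| S) =ᵐ[volume.restrict (Ioc a b)] fun _ => S := by
    filter_upwards [ae_le_eLpNormEssSup (f := v) (μ := volume.restrict (Ioc a b))] with y hy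
    exact max_eq_right (by simpa [S] using ENNReal.toReal_mono hfinite.ne hy)
  have heq := Measure.eqOn_Ioc_of_ae_eq volume hae (by fun_prop) continuousOn_const
  exact max_eq_right_iff.1 (heq hx)

theorem abs_le_of_setIntegral_eq_zero {v : ℝ → ℝ} {L : ℝ} (hv : Differentiable ℝ v)
    (hper : Function.Periodic v 1) (hmean : ∫ x in Ioc (0 : ℝ) 1, v x = 0)
    (hL : ∀ x, |deriv v x| ≤ L) (x : ℝ) : |v x| ≤ L := by
  have hL0 : 0 ≤ L := (abs_nonneg _).trans (hL x)
  obtain ⟨y, hy, hxy⟩ := hper.exists_mem_Ioc one_pos x 0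
  rw [zero_add] at hy
  have hint : IntegrableOn v (Ioc 0 1) :=
    hv.continuous.integrableOn_Icc.mono_set Ioc_subset_Icc_self
  have hmean' : ∫ z in Ioc (0 : ℝ) 1, (v y - v z) = v y := by
    rw [integral_sub (by simp) hint, hmean]
    simp
  have hosc : ∀ z ∈ Ioc (0 : ℝ) 1, ‖v y - v z‖ ≤ L := fun z hz =>
    calc ‖v y - v z‖ ≤ L * ‖y - z‖ := convex_univ.norm_image_sub_le_of_norm_deriv_le
          (fun w _ => hv w) (fun w _ => hL w) (mem_univ z) (mem_univ y)
      _ ≤ L * 1 := by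
        gcongr
        exact Real.norm_eq_abs _ ▸ abs_le.2 ⟨by linarith [hy.1, hz.2], by linarith [hy.2, hz.1]⟩
      _ = L := mul_one L
  rw [hxy, ← hmean']
  simpa using norm_setIntegral_le_of_norm_le_const (μ := volume) (by simp) hosc

theorem abs_deriv_le_sobLp_one_top {v : ℝ → ℝ} (hv : ContDiff ℝ 1 v)
    (hper : Function.Periodic v 1) (x : ℝ) : |deriv v x| ≤ sobLp 1 ⊤ v := by
  have hper' : Function.Periodic (deriv v) 1 := by
    simpa using periodic_iteratedDeriv hper 1
  obtain ⟨y, hy, hxy⟩ := hper'.exists_mem_Ioc one_pos x 0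
  rw [hxy, sobLp, iteratedDeriv_one]
  exact abs_le_toReal_eLpNorm_top (hv.continuous_deriv le_rfl) (by simpa using hy)

namespace IsBoundedBurgersFlow

variable {f : ℝ → ℝ} {D ν t : ℝ} {u : ℝ → ℝ → ℝ}

theorem integrableOn_slopeGap (h : IsBoundedBurgersFlow f D ν u) (ht : 0 ≤ t) :
    IntegrableOn (slopeGap D u t) (Ioc 0 1) := by
  have hcont : Continuous (slopeGap D u t) :=
    continuous_const.sub ((contDiff_infty.1 (h.contDiff ht) 1).continuous_deriv le_rfl)
  exact hcont.integrableOn_Icc.mono_set Ioc_subset_Icc_self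

theorem exists_abs_iteratedDeriv_le_gapWeight {m : ℕ} {p : ℝ≥0∞} (hf : ContDiff ℝ (⊤ : ℕ∞) f)
    (hconv : ConvexOn ℝ univ f) (D : ℝ) (hm : 1 ≤ m) (hmp : (m ≤ 1 ∧ 1 ≤ p) ∨ (2 ≤ m ∧ 1 < p)) :
    ∃ β ≥ (1 / p).toReal, ∃ C > 0, ∀ ν u, IsBoundedBurgersFlow f D ν u → ∀ t > 0, ∀ x,
      |iteratedDeriv m (u t) x| ≤
        C * gapWeight D β (inverseScale ν t) u t x * inverseScale ν t ^ m := by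
  rcases hmp with ⟨hm', hp⟩ | ⟨-, hp⟩
  · obtain rfl : m = 1 := le_antisymm hm' hm
    obtain ⟨C, hC, hbound⟩ := exists_abs_deriv_le_gapWeight hf hconv D le_rfl
    refine ⟨1, toReal_one_div_le_one hp, C + 1, by positivity, fun ν u h t ht x => ?_⟩
    have hM := inverseScale_pos (t := t) h.viscosity_pos
    have hweight := h.gapWeight_pos (β := 1) hf hconv hM ht.le x
    rw [iteratedDeriv_one, pow_one]
    refine (hbound ν u h t ht x).trans ?_
    gcongr
    exact le_add_of_nonneg_right zero_le_one
  · have hq : (1 / p).toReal < 1 :=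
      ENNReal.toReal_lt_of_lt_ofReal (by simpa [ENNReal.inv_lt_one] using hp)
    obtain ⟨C, hC, hbound⟩ := exists_derivBoundAt_gapWeight hf hconv D
      (le_max_left (1 / 2) (1 / p).toReal) (max_lt (by norm_num) hq) m
    exact ⟨_, le_max_right _ _, C, hC, fun ν u h t ht x => hbound ν u h t ht x m hm le_rfl⟩

theorem exists_abs_iteratedDeriv_le {m : ℕ} {p : ℝ≥0∞} (hf : ContDiff ℝ (⊤ : ℕ∞) f)
    (hconv : ConvexOn ℝ univ f) (D : ℝ) (hmp : (m ≤ 1 ∧ 1 ≤ p) ∨ (2 ≤ m ∧ 1 < p)) :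
    ∃ C > 0, ∀ ν u, IsBoundedBurgersFlow f D ν u → ∀ t > 0, ∀ x, |iteratedDeriv m (u t) x| ≤
      C * inverseScale ν t ^ max 0 ((m : ℝ) - (1 / p).toReal) *
        slopeGap D u t x ^ (1 / p).toReal := by
  set q := (1 / p).toReal
  have hq : 0 ≤ q := ENNReal.toReal_nonneg
  rcases m.eq_zero_or_pos with rfl | hm
  · refine ⟨|D| + 1, by positivity, fun ν u h t ht x => ?_⟩
    rw [max_eq_left (by simpa using hq), Real.rpow_zero, mul_one, iteratedDeriv_zero]
    calc |u t x| ≤ |D| + 1 := by linarith [h.abs_le hf ht.le x, le_abs_self D]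
      _ ≤ (|D| + 1) * slopeGap D u t x ^ q := le_mul_of_one_le_right (by positivity)
        (Real.one_le_rpow (h.one_le_slopeGap hf hconv ht.le x) hq)
  · obtain ⟨β, hβ, C, hC, hbound⟩ := exists_abs_iteratedDeriv_le_gapWeight hf hconv D hm hmp
    obtain ⟨G, hG, hgap⟩ := exists_slopeGap_div_le hf D
    refine ⟨C * G ^ (β - q), by positivity, fun ν u h t ht x => ?_⟩
    have hM := inverseScale_pos (t := t) h.viscosity_pos
    have hgap0 := one_pos.trans_le (h.one_le_slopeGap hf hconv ht.le x)
    have hp : 1 ≤ p := hmp.elim And.right fun h => h.2.le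
    have hqm : q ≤ m := (toReal_one_div_le_one hp).trans (mod_cast hm)
    rw [max_eq_right (sub_nonneg.2 hqm)]
    calc |iteratedDeriv m (u t) x|
        ≤ C * (slopeGap D u t x / inverseScale ν t) ^ β * inverseScale ν t ^ m :=
          hbound ν u h t ht x
      _ ≤ C * (G ^ (β - q) * (slopeGap D u t x / inverseScale ν t) ^ q) *
            inverseScale ν t ^ m := by
          gcongr
          exact rpow_le_rpow_sub_mul_rpow (div_pos hgap0 hM)
            (hgap ν u h _ (le_max_left _ _) t ht.le x) hβ
      _ = _ := by
          rw [Real.div_rpow hgap0.le hM.le, Real.rpow_sub hM, Real.rpow_natCast]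
          ring

end IsBoundedBurgersFlow

theorem IsBurgersSolution.isBoundedBurgersFlow {f : ℝ → ℝ} {σ ν : ℝ} {u : ℝ → ℝ → ℝ}
    (h : IsBurgersSolution f σ ν u) (hν : ν ≤ 1) : IsBoundedBurgersFlow f (burgersD u) ν u := by
  have hflow : IsBurgersFlow f ν u := ⟨h.hu, h.hper, h.hpde⟩
  have hinit : ContDiff ℝ 1 (u 0) := contDiff_infty.1 (hflow.contDiff le_rfl) 1
  have hderiv : ∀ x, |deriv (u 0) x| ≤ burgersD u := fun x =>
    (abs_deriv_le_sobLp_one_top hinit (h.hper 0) x).trans (le_max_right _ _)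
  exact {
    toIsBurgersFlow := hflow
    viscosity_pos := h.hν
    viscosity_le_one := hν
    abs_init_le := abs_le_of_setIntegral_eq_zero (hinit.differentiable one_ne_zero) (h.hper 0)
      (h.hmean 0 le_rfl) hderiv
    abs_deriv_init_le := hderiv }

theorem IsBurgersSolution.convexOn {f : ℝ → ℝ} {σ ν : ℝ} {u : ℝ → ℝ → ℝ}
    (h : IsBurgersSolution f σ ν u) : ConvexOn ℝ univ f := by
  refine convexOn_univ_of_deriv2_nonneg (h.hf.differentiable (by simp)) ?_ fun y => ?_
  · exact (contDiff_infty_iff_deriv.1 h.hf).2.differentiable (by simp)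
  · rw [← iteratedDeriv_eq_iterate]
    exact h.hσ.le.trans (h.hconv y)

theorem statement6_general (f : ℝ → ℝ) (hf : ContDiff ℝ (⊤ : ℕ∞) f) (hconv : ConvexOn ℝ univ f)
    (D : ℝ) (m : ℕ) (p : ℝ≥0∞) (hmp : (m ≤ 1 ∧ 1 ≤ p) ∨ (2 ≤ m ∧ 1 < p)) :
    ∃ C > 0, ∀ ν u, IsBoundedBurgersFlow f D ν u → ∀ t > 0,
      sobLp m p (u t) ≤ C * max (ν ^ (-(max 0 ((m : ℝ) - (1 / p).toReal))))
        (t ^ (-(max 0 ((m : ℝ) - (1 / p).toReal)))) := by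
  obtain ⟨C, hC, hbound⟩ := IsBoundedBurgersFlow.exists_abs_iteratedDeriv_le hf hconv D hmp
  have hp : p ≠ 0 := by rintro rfl; simp at hmp
  refine ⟨C * (|D| + 1) ^ (1 / p).toReal, by positivity, fun ν u h t ht => ?_⟩
  have hM := inverseScale_pos (t := t) h.viscosity_pos
  have hD := h.bound_nonneg
  rw [max_rpow_neg_eq_inverseScale_rpow h.viscosity_pos ht (le_max_left _ _)]
  calc sobLp m p (u t) ≤ C * inverseScale ν t ^ max 0 ((m : ℝ) - (1 / p).toReal) *
        (∫ x in Ioc 0 1, slopeGap D u t x) ^ (1 / p).toReal :=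
      eLpNorm_le_of_abs_le_rpow hp (by positivity)
        (fun x => zero_le_one.trans (h.one_le_slopeGap hf hconv ht.le x))
        (h.integrableOn_slopeGap ht.le) (.of_forall (hbound ν u h t ht))
    _ = _ := by
      rw [h.integral_slopeGap ht.le, abs_of_nonneg hD]
      ring

/-- For `m ∈ {0,1}` and `p ∈ [1,∞]`, or `m ≥ 2` and `p ∈ (1,∞]`,
with `γ = max(0, m - 1/p)`, there is a constant `C > 0` depending only on `f`,
`D`, `m`, `p` such that for every `ν ∈ (0,1]` and every `t > 0`,
`|u(t)|_{m,p} ≤ C max(ν^{-γ}, t^{-γ})`. -/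
theorem statement6 (f : ℝ → ℝ) (σ D : ℝ) (m : ℕ) (p : ℝ≥0∞)
    (hmp : (m ≤ 1 ∧ 1 ≤ p) ∨ (2 ≤ m ∧ 1 < p)) :
    ∃ C > 0, ∀ ν, 0 < ν → ν ≤ 1 →
      ∀ u : ℝ → ℝ → ℝ, IsBurgersSolution f σ ν u → burgersD u = D →
        ∀ t, 0 < t →
          sobLp m p (u t)
            ≤ C * max (ν ^ (-(max 0 ((m : ℝ) - (1 / p).toReal))))
                (t ^ (-(max 0 ((m : ℝ) - (1 / p).toReal)))) := by
  by_cases hf : ContDiff ℝ (⊤ : ℕ∞) f ∧ ConvexOn ℝ univ f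
  · obtain ⟨C, hC, hbound⟩ := statement6_general f hf.1 hf.2 D m p hmp
    exact ⟨C, hC, fun ν _ hν u h hD => hbound ν u (hD ▸ h.isBoundedBurgersFlow hν)⟩
  · exact ⟨1, one_pos, fun ν _ _ u h => (hf ⟨h.hf, h.convexOn⟩).elim⟩
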